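/- arXiv:2205.01487 — 4 statements merged into one kernel-verified Lean document; each statement's English description precedes it below -/
import Mathlib

section
/- For all k ∈ ℝ one has the commutation identity ε₁ (d/dk) 𝒯_b(f₁,f₂,f₃)(k) = −ε₂ 𝒯_b(f₁',f₂,f₃)(k) + ε₃ 𝒯_b(f₁,f₂',f₃)(k) − ε₄ 𝒯_b(f₁,f₂,f₃')(k) − 2it 𝒯_{b̃}(f₁,f₂,f₃)(k), where b̃(y) := y·b(y). -/
open MeasureTheory Filter Topology Set

/-- The trilinear form
`𝒯_b(f₁,f₂,f₃)(k) = ∭ e^{it(−k²+ℓ²−m²+n²)} f₁(ℓ) conj(f₂(m)) f₃(n) b(ε₁k+ε₂ℓ+ε₃m+ε₄n)`. -/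
noncomputable def Tform (t e1 e2 e3 e4 : ℝ) (b f1 f2 f3 : ℝ → ℂ) (k : ℝ) : ℂ :=
  ∫ l : ℝ, ∫ m : ℝ, ∫ n : ℝ,
    Complex.exp (Complex.I * (t : ℂ) * ((-(k ^ 2) + l ^ 2 - m ^ 2 + n ^ 2 : ℝ) : ℂ)) *
      f1 l * (starRingEnd ℂ) (f2 m) * f3 n * b (e1 * k + e2 * l + e3 * m + e4 * n)

/-- The integrand of `Tform` as a function on `ℝ × ℝ × ℝ`. -/
noncomputable def Gint (t e1 e2 e3 e4 : ℝ) (b f1 f2 f3 : ℝ → ℂ) (k : ℝ) (p : ℝ × ℝ × ℝ) : ℂ :=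
  Complex.exp (Complex.I * (t : ℂ) *
      ((-(k ^ 2) + p.1 ^ 2 - p.2.1 ^ 2 + p.2.2 ^ 2 : ℝ) : ℂ)) *
    f1 p.1 * (starRingEnd ℂ) (f2 p.2.1) * f3 p.2.2 *
      b (e1 * k + e2 * p.1 + e3 * p.2.1 + e4 * p.2.2)

lemma Gint_norm (t e1 e2 e3 e4 : ℝ) (b f1 f2 f3 : ℝ → ℂ) (k : ℝ) (p : ℝ × ℝ × ℝ) :
    ‖Gint t e1 e2 e3 e4 b f1 f2 f3 k p‖ =
      ‖f1 p.1‖ * (‖f2 p.2.1‖ * ‖f3 p.2.2‖) *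
        ‖b (e1 * k + e2 * p.1 + e3 * p.2.1 + e4 * p.2.2)‖ := by
  have h : ‖Complex.exp (Complex.I * (t : ℂ) *
      ((-(k ^ 2) + p.1 ^ 2 - p.2.1 ^ 2 + p.2.2 ^ 2 : ℝ) : ℂ))‖ = 1 := by
    have := Complex.norm_exp_ofReal_mul_I
      (t * (-(k ^ 2) + p.1 ^ 2 - p.2.1 ^ 2 + p.2.2 ^ 2))
    rw [← this]
    congr 2
    push_cast
    ring
  unfold Gint
  rw [norm_mul, norm_mul, norm_mul, norm_mul, h, RCLike.norm_conj]
  ring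

lemma Gint_cont (t e1 e2 e3 e4 : ℝ) {b f1 f2 f3 : ℝ → ℂ} (k : ℝ)
    (hb : Continuous b) (h1 : Continuous f1) (h2 : Continuous f2) (h3 : Continuous f3) :
    Continuous (Gint t e1 e2 e3 e4 b f1 f2 f3 k) := by
  unfold Gint
  have := Complex.continuous_conj
  fun_prop

lemma dom_integrable {f1 f2 f3 : ℝ → ℂ}
    (h1 : Integrable f1) (h2 : Integrable f2) (h3 : Integrable f3) :
    Integrable (fun p : ℝ × ℝ × ℝ => ‖f1 p.1‖ * (‖f2 p.2.1‖ * ‖f3 p.2.2‖)) :=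
  h1.norm.mul_prod (h2.norm.mul_prod h3.norm)

lemma Gint_integrable (t e1 e2 e3 e4 : ℝ) {b : ℝ → ℂ} (f1 f2 f3 : SchwartzMap ℝ ℂ) (k : ℝ)
    (hb : Continuous b) (C : ℝ) (hC : ∀ x, ‖b x‖ ≤ C) :
    Integrable (Gint t e1 e2 e3 e4 b f1 f2 f3 k) := by
  refine ((dom_integrable f1.integrable f2.integrable f3.integrable).mul_const C).mono'
    (Gint_cont t e1 e2 e3 e4 k hb f1.continuous f2.continuous f3.continuous).aestronglyMeasurable
    (Eventually.of_forall fun p => ?_)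
  rw [Gint_norm]
  exact mul_le_mul_of_nonneg_left (hC _) (by positivity)

lemma Tform_eq (t e1 e2 e3 e4 : ℝ) {b f1 f2 f3 : ℝ → ℂ} (k : ℝ)
    (h : Integrable (Gint t e1 e2 e3 e4 b f1 f2 f3 k)) :
    Tform t e1 e2 e3 e4 b f1 f2 f3 k = ∫ p, Gint t e1 e2 e3 e4 b f1 f2 f3 k p := by
  have h' : Integrable (Gint t e1 e2 e3 e4 b f1 f2 f3 k) (volume.prod volume) := h
  have e := integral_prod _ h'
  rw [← Measure.volume_eq_prod] at e
  rw [e]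
  unfold Tform
  apply integral_congr_ae
  filter_upwards [h'.prod_right_ae] with l hl
  have hl' : Integrable (fun y => Gint t e1 e2 e3 e4 b f1 f2 f3 k (l, y))
    (volume.prod volume) := hl
  have e' := integral_prod _ hl'
  rw [← Measure.volume_eq_prod] at e'
  rw [e']
  rfl

lemma Gint_hasDerivAt (t e1 e2 e3 e4 : ℝ) (b f1 f2 f3 : SchwartzMap ℝ ℂ)
    {K L M N : ℝ → ℝ} {K' L' M' N' s : ℝ} (hK : HasDerivAt K K' s) (hL : HasDerivAt L L' s)
    (hM : HasDerivAt M M' s) (hN : HasDerivAt N N' s) :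
    HasDerivAt (fun s => Gint t e1 e2 e3 e4 b f1 f2 f3 (K s) (L s, M s, N s))
      (2 * Complex.I * t * ((-(K s * K') + L s * L' - M s * M' + N s * N' : ℝ) : ℂ) *
          Gint t e1 e2 e3 e4 b f1 f2 f3 (K s) (L s, M s, N s)
        + L' * Gint t e1 e2 e3 e4 b (deriv f1) f2 f3 (K s) (L s, M s, N s)
        + M' * Gint t e1 e2 e3 e4 b f1 (deriv f2) f3 (K s) (L s, M s, N s)
        + N' * Gint t e1 e2 e3 e4 b f1 f2 (deriv f3) (K s) (L s, M s, N s)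
        + ((e1 * K' + e2 * L' + e3 * M' + e4 * N' : ℝ) : ℂ) *
          Gint t e1 e2 e3 e4 (deriv b) f1 f2 f3 (K s) (L s, M s, N s)) s := by
  have hp := ((((hK.pow 2).neg.add (hL.pow 2)).sub (hM.pow 2)).add (hN.pow 2)).ofReal_comp
  have hE := (hp.const_mul (Complex.I * (t : ℂ))).cexp
  have h1 := (f1.hasDerivAt (L s)).scomp s hL
  have h2 := ((f2.hasDerivAt (M s)).scomp s hM).star
  have h3 := (f3.hasDerivAt (N s)).scomp s hN
  have ha := (((hK.const_mul e1).add (hL.const_mul e2)).add (hM.const_mul e3)).add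
    (hN.const_mul e4)
  have hb := (b.hasDerivAt (e1 * K s + e2 * L s + e3 * M s + e4 * N s)).scomp s ha
  have := (((hE.mul h1).mul h2).mul h3).mul hb
  refine this.congr_deriv ?_
  simp only [Gint, Function.comp, Pi.add_apply, Pi.sub_apply, Pi.neg_apply, Pi.pow_apply,
    Pi.mul_apply, Complex.real_smul, star_mul', starRingEnd_apply]
  simp only [← starRingEnd_apply, Complex.conj_ofReal]
  push_cast
  ring


/-- Commutation identity:
`ε₁ ∂_k 𝒯_b(f₁,f₂,f₃) = −ε₂ 𝒯_b(f₁',f₂,f₃) + ε₃ 𝒯_b(f₁,f₂',f₃) − ε₄ 𝒯_b(f₁,f₂,f₃')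
  − 2it 𝒯_{y·b}(f₁,f₂,f₃)`. -/
theorem statement_11 (t : ℝ) (e1 e2 e3 e4 : ℝ)
    (h1 : e1 = 1 ∨ e1 = -1) (h2 : e2 = 1 ∨ e2 = -1)
    (h3 : e3 = 1 ∨ e3 = -1) (h4 : e4 = 1 ∨ e4 = -1)
    (b f1 f2 f3 : SchwartzMap ℝ ℂ) (k : ℝ) :
    (e1 : ℂ) * deriv (fun k' => Tform t e1 e2 e3 e4 b f1 f2 f3 k') k =
      -(e2 : ℂ) * Tform t e1 e2 e3 e4 b (fun l => deriv (f1 : ℝ → ℂ) l) f2 f3 k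
      + (e3 : ℂ) * Tform t e1 e2 e3 e4 b f1 (fun m => deriv (f2 : ℝ → ℂ) m) f3 k
      - (e4 : ℂ) * Tform t e1 e2 e3 e4 b f1 f2 (fun n => deriv (f3 : ℝ → ℂ) n) k
      - 2 * Complex.I * (t : ℂ) *
          Tform t e1 e2 e3 e4 (fun y => (y : ℂ) * b y) f1 f2 f3 k := by
  have s1 : e1 * e1 = 1 := by rcases h1 with h | h <;> simp [h]
  have s2 : e2 * e2 = 1 := by rcases h2 with h | h <;> simp [h]
  have s3 : e3 * e3 = 1 := by rcases h3 with h | h <;> simp [h]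
  have s4 : e4 * e4 = 1 := by rcases h4 with h | h <;> simp [h]
  let D : SchwartzMap ℝ ℂ → SchwartzMap ℝ ℂ := fun f => SchwartzMap.derivCLM ℂ ℂ f
  have bdd : ∀ f : SchwartzMap ℝ ℂ, ∃ C, 0 ≤ C ∧ ∀ x, ‖f x‖ ≤ C := by
    intro f
    obtain ⟨C, hC, h⟩ := f.decay 0 0
    exact ⟨C, hC.le, fun x => by simpa using h x⟩
  obtain ⟨B, hB0, hB⟩ := bdd b
  obtain ⟨B', hB'0, hB'⟩ := bdd (D b)
  obtain ⟨Bt, hBt0, hBt⟩ := b.decay 1 0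
  have cbt : Continuous (fun y : ℝ => (y : ℂ) * b y) := by
    have := b.continuous
    fun_prop
  have i0 : ∀ k, Integrable (Gint t e1 e2 e3 e4 b f1 f2 f3 k) := fun k =>
    Gint_integrable t e1 e2 e3 e4 f1 f2 f3 k b.continuous B hB
  have i1 : Integrable (Gint t e1 e2 e3 e4 b (deriv f1) f2 f3 k) :=
    Gint_integrable t e1 e2 e3 e4 (D f1) f2 f3 k b.continuous B hB
  have i2 : Integrable (Gint t e1 e2 e3 e4 b f1 (deriv f2) f3 k) :=
    Gint_integrable t e1 e2 e3 e4 f1 (D f2) f3 k b.continuous B hB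
  have i3 : Integrable (Gint t e1 e2 e3 e4 b f1 f2 (deriv f3) k) :=
    Gint_integrable t e1 e2 e3 e4 f1 f2 (D f3) k b.continuous B hB
  have ib : ∀ k, Integrable (Gint t e1 e2 e3 e4 (deriv b) f1 f2 f3 k) := fun k =>
    Gint_integrable t e1 e2 e3 e4 f1 f2 f3 k (D b).continuous B' hB'
  have it : Integrable (Gint t e1 e2 e3 e4 (fun y => (y : ℂ) * b y) f1 f2 f3 k) :=
    Gint_integrable t e1 e2 e3 e4 f1 f2 f3 k cbt Bt (fun x => by simpa using hBt x)
  have hd : HasDerivAt (fun k' => ∫ p, Gint t e1 e2 e3 e4 b f1 f2 f3 k' p)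
      (∫ p, (2 * Complex.I * t * ((-k : ℝ) : ℂ) * Gint t e1 e2 e3 e4 b f1 f2 f3 k p
        + (e1 : ℂ) * Gint t e1 e2 e3 e4 (deriv b) f1 f2 f3 k p)) k := by
    refine (hasDerivAt_integral_of_dominated_loc_of_deriv_le
      (F' := fun k p => 2 * Complex.I * t * ((-k : ℝ) : ℂ) * Gint t e1 e2 e3 e4 b f1 f2 f3 k p
        + (e1 : ℂ) * Gint t e1 e2 e3 e4 (deriv b) f1 f2 f3 k p)
      (bound := fun p => ‖f1 p.1‖ * (‖f2 p.2.1‖ * ‖f3 p.2.2‖) *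
        (2 * |t| * (|k| + 1) * B + |e1| * B'))
      (Metric.ball_mem_nhds k one_pos)
      (Eventually.of_forall fun k => (i0 k).aestronglyMeasurable) (i0 k)
      (((i0 k).const_mul _).add ((ib k).const_mul _)).aestronglyMeasurable
      (Eventually.of_forall fun p x hx => ?_)
      ((dom_integrable f1.integrable f2.integrable f3.integrable).mul_const _)
      (Eventually.of_forall fun p x hx => ?_)).2
    · refine (norm_add_le _ _).trans ?_
      rw [norm_mul, norm_mul (e1 : ℂ), Gint_norm, Gint_norm]
      have hx' : |x| ≤ |k| + 1 := by
        have h : |x - k| < 1 := by simpa [Real.dist_eq] using hx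
        have := abs_add_le (x - k) k
        rw [sub_add_cancel] at this
        linarith
      have hn : ‖2 * Complex.I * (t : ℂ) * ((-x : ℝ) : ℂ)‖ = 2 * |t| * |x| := by
        simp
      rw [hn, Complex.norm_real, Real.norm_eq_abs]
      set a := e1 * x + e2 * p.1 + e3 * p.2.1 + e4 * p.2.2
      set A := ‖f1 p.1‖ * (‖f2 p.2.1‖ * ‖f3 p.2.2‖)
      have hA : 0 ≤ A := by positivity
      have e : 2 * |t| * |x| * (A * ‖b a‖) + |e1| * (A * ‖deriv b a‖) =
        A * (2 * |t| * |x| * ‖b a‖ + |e1| * ‖deriv b a‖) := by ring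
      rw [e]
      have q1 := hB a
      have q2 : ‖deriv b a‖ ≤ B' := hB' a
      gcongr
    · have := Gint_hasDerivAt t e1 e2 e3 e4 b f1 f2 f3 (hasDerivAt_id x)
        (hasDerivAt_const x p.1) (hasDerivAt_const x p.2.1) (hasDerivAt_const x p.2.2)
      refine this.congr_deriv ?_
      simp
  have hT : (fun k' => Tform t e1 e2 e3 e4 b f1 f2 f3 k') =
      fun k' => ∫ p, Gint t e1 e2 e3 e4 b f1 f2 f3 k' p :=
    funext fun kk => Tform_eq t e1 e2 e3 e4 kk (i0 kk)
  let H : ℝ × ℝ × ℝ → ℂ := fun p =>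
    (e2 : ℂ) * Gint t e1 e2 e3 e4 b (deriv f1) f2 f3 k p
    + (-e3 : ℂ) * Gint t e1 e2 e3 e4 b f1 (deriv f2) f3 k p
    + (e4 : ℂ) * Gint t e1 e2 e3 e4 b f1 f2 (deriv f3) k p
    + Gint t e1 e2 e3 e4 (deriv b) f1 f2 f3 k p
    + 2 * Complex.I * t * Gint t e1 e2 e3 e4 (fun y => (y : ℂ) * b y) f1 f2 f3 k p
    + (-(2 * Complex.I * t * e1 * k)) * Gint t e1 e2 e3 e4 b f1 f2 f3 k p
  have j1 := i1.const_mul (e2 : ℂ)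
  have j2 := i2.const_mul (-e3 : ℂ)
  have j3 := i3.const_mul (e4 : ℂ)
  have j4 := ib k
  have j5 := it.const_mul (2 * Complex.I * t)
  have j6 := (i0 k).const_mul (-(2 * Complex.I * t * e1 * k))
  have hH : Integrable H := ((((j1.add j2).add j3).add j4).add j5).add j6
  have hHd : ∀ p, HasLineDerivAt ℝ (Gint t e1 e2 e3 e4 b f1 f2 f3 k) (H p) p (e2, -e3, e4) := by
    rintro ⟨l, m, n⟩
    have aff : ∀ x c : ℝ, HasDerivAt (fun s : ℝ => x + s * c) c 0 := fun x c => by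
      simpa using ((hasDerivAt_id (0 : ℝ)).mul_const c).const_add x
    have := Gint_hasDerivAt t e1 e2 e3 e4 b f1 f2 f3 (hasDerivAt_const (0 : ℝ) k)
      (aff l e2) (aff m (-e3)) (aff n e4)
    unfold HasLineDerivAt
    refine this.congr_deriv ?_
    have e : e1 * 0 + e2 * e2 + e3 * -e3 + e4 * e4 = 1 := by linear_combination s2 - s3 + s4
    simp only [e, H, zero_mul, add_zero]
    simp only [Gint]
    push_cast
    ring
  have hz : ∫ p, H p = 0 := by
    have q2 : (volume : Measure (ℝ × ℝ)).IsAddHaarMeasure :=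
      Measure.prod.instIsAddHaarMeasure (volume : Measure ℝ) (volume : Measure ℝ)
    have q3 : (volume : Measure (ℝ × ℝ × ℝ)).IsAddHaarMeasure :=
      Measure.prod.instIsAddHaarMeasure (volume : Measure ℝ) (volume : Measure (ℝ × ℝ))
    have := integral_bilinear_hasLineDerivAt_right_eq_neg_left_of_integrable
      (μ := (volume : Measure (ℝ × ℝ × ℝ))) (B := ContinuousLinearMap.mul ℝ ℂ)
      (f := fun _ => 1) (f' := fun _ => 0) (g := Gint t e1 e2 e3 e4 b f1 f2 f3 k) (g' := H)
      (v := (e2, -e3, e4)) (by simp) (by simpa using hH) (by simpa using i0 k)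
      (fun x _ => by unfold HasLineDerivAt; exact hasDerivAt_const _ _) (fun x _ => hHd x)
    simpa using this
  have hz' : ∫ p, H p = _ := integral_add ((((j1.add j2).add j3).add j4).add j5) j6
  have hz2 := integral_add (((j1.add j2).add j3).add j4) j5
  have hz3 := integral_add ((j1.add j2).add j3) j4
  have hz4 := integral_add (j1.add j2) j3
  have hz5 := integral_add j1 j2
  simp only [Pi.add_apply, integral_const_mul] at hz' hz2 hz3 hz4 hz5
  rw [hz2, hz3, hz4, hz5, hz] at hz'
  have hd' := hd.deriv
  rw [integral_add ((i0 k).const_mul _) ((ib k).const_mul _), integral_const_mul,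
    integral_const_mul] at hd'
  rw [hT, hd']
  rw [Tform_eq t e1 e2 e3 e4 k i1, Tform_eq t e1 e2 e3 e4 k i2, Tform_eq t e1 e2 e3 e4 k i3,
    Tform_eq t e1 e2 e3 e4 k it]
  have s1' : (e1 : ℂ) * e1 = 1 := by exact_mod_cast s1
  push_cast
  linear_combination (∫ p, Gint t e1 e2 e3 e4 (deriv b) f1 f2 f3 k p) * s1' - hz'
end

section
/- Assume ε₁ = +1, and for j = 1,2,3 let u_j(t,x) := (2π)^{−1/2} ∫_ℝ e^{ixℓ} e^{itℓ²} f_j(ℓ) dℓ (the free Schrödinger evolution at time t of the inverse Fourier transform of f_j). Then for all x ∈ ℝ: F̂^{−1}[ k ↦ e^{itk²} 𝒯_b(f₁,f₂,f₃)(k) ](x) = (2π)^{3/2} · u₁(t, −ε₂ x) · conj(u₂(t, ε₃ x)) · u₃(t, −ε₄ x) · (F̂^{−1} b)(x). -/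
open MeasureTheory Filter Topology Set

/-- Inverse Fourier transform `F̂⁻¹[g](x) = (2π)^{−1/2} ∫ e^{ixξ} g(ξ) dξ`. -/
noncomputable def invFT (g : ℝ → ℂ) (x : ℝ) : ℂ :=
  (Real.sqrt (2 * Real.pi) : ℂ)⁻¹ * ∫ ξ : ℝ, Complex.exp (Complex.I * (x : ℂ) * (ξ : ℂ)) * g ξ

/-- The free Schrödinger evolution at time `t` of the inverse Fourier transform of `f`:
`u(t,x) = (2π)^{−1/2} ∫ e^{ixℓ} e^{itℓ²} f(ℓ) dℓ`. -/
noncomputable def freeEvol (t : ℝ) (f : ℝ → ℂ) (x : ℝ) : ℂ :=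
  (Real.sqrt (2 * Real.pi) : ℂ)⁻¹ * ∫ l : ℝ,
    Complex.exp (Complex.I * (x : ℂ) * (l : ℂ)) *
      Complex.exp (Complex.I * (t : ℂ) * (l : ℂ) ^ 2) * f l


lemma shear_aux (e : ℝ) (G H : ℝ → ℂ) (hG : Integrable G) (hH : Integrable H) :
    Integrable (fun k => ∫ l, G l * H (k + e * l)) ∧
      ∫ k, ∫ l, G l * H (k + e * l) = (∫ l, G l) * ∫ y, H y := by
  have hmp : MeasurePreserving (fun p : ℝ × ℝ => (p.1, p.2 + e * p.1))
      (volume.prod volume) (volume.prod volume) := by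
    refine MeasurePreserving.skew_product (f := id) (g := fun l k => k + e * l)
      (MeasurePreserving.id _) (by fun_prop) ?_
    exact Filter.Eventually.of_forall fun l => map_add_right_eq_self volume (e * l)
  have hint : Integrable (fun p : ℝ × ℝ => G p.1 * H (p.2 + e * p.1)) (volume.prod volume) :=
    hmp.integrable_comp_of_integrable (hG.mul_prod hH)
  refine ⟨hint.integral_prod_right, ?_⟩
  rw [← integral_integral_swap (f := fun l k => G l * H (k + e * l)) hint]
  have : ∀ l, ∫ k, G l * H (k + e * l) = G l * ∫ y, H y := fun l => by
    rw [integral_const_mul, integral_add_right_eq_self]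
  simp_rw [this]
  rw [integral_mul_const]

lemma phase_integrable (f : SchwartzMap ℝ ℂ) (φ : ℝ → ℝ) (hφ : Continuous φ) :
    Integrable (fun l => Complex.exp (Complex.I * (φ l : ℂ)) * f l) := by
  refine (f.integrable (μ := volume)).bdd_mul (c := 1) (by fun_prop) ?_
  refine Filter.Eventually.of_forall fun l => ?_
  rw [mul_comm, Complex.norm_exp_ofReal_mul_I]

/-- With `ε₁ = 1`:
`F̂⁻¹[e^{itk²} 𝒯_b(f₁,f₂,f₃)](x)
  = (2π)^{3/2} u₁(t,−ε₂x) conj(u₂(t,ε₃x)) u₃(t,−ε₄x) (F̂⁻¹b)(x)`. -/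
theorem statement_12 (t : ℝ) (e2 e3 e4 : ℝ)
    (h2 : e2 = 1 ∨ e2 = -1) (h3 : e3 = 1 ∨ e3 = -1) (h4 : e4 = 1 ∨ e4 = -1)
    (b f1 f2 f3 : SchwartzMap ℝ ℂ) (x : ℝ) :
    invFT (fun k => Complex.exp (Complex.I * (t : ℂ) * (k : ℂ) ^ 2) *
        Tform t 1 e2 e3 e4 b f1 f2 f3 k) x =
      (((2 * Real.pi) ^ ((3:ℝ)/2) : ℝ) : ℂ) * freeEvol t f1 (-e2 * x) *
        (starRingEnd ℂ) (freeEvol t f2 (e3 * x)) * freeEvol t f3 (-e4 * x) * invFT b x := by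
  obtain ⟨P, hP⟩ : ∃ P : ℝ → (SchwartzMap ℝ ℂ) → ℝ → ℂ, P = fun (y : ℝ) (f : SchwartzMap ℝ ℂ) (l : ℝ) =>
    Complex.exp (Complex.I * (y : ℂ) * (l : ℂ)) *
      Complex.exp (Complex.I * (t : ℂ) * (l : ℂ) ^ 2) * f l := ⟨_, rfl⟩
  have hPi : ∀ y f, Integrable (P y f) := fun y f => by
    have := phase_integrable f (fun l => y * l + t * l ^ 2) (by fun_prop)
    refine this.congr (Filter.Eventually.of_forall fun l => ?_)
    simp only [hP]
    rw [← Complex.exp_add]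
    congr 2
    push_cast
    ring
  obtain ⟨B, hB⟩ : ∃ B : ℝ → ℂ, B = fun (y : ℝ) =>
    Complex.exp (Complex.I * (x : ℂ) * (y : ℂ)) * b y := ⟨_, rfl⟩
  have hBi : Integrable B := by
    have := phase_integrable b (fun l => x * l) (by fun_prop)
    refine this.congr (Filter.Eventually.of_forall fun l => ?_)
    simp only [hB]
    congr 2
    push_cast
    ring
  have hQi : Integrable (fun m => (starRingEnd ℂ) (P (e3 * x) f2 m)) :=
    (Complex.conjLIE.toContinuousLinearEquiv.toContinuousLinearMap).integrable_comp (hPi _ _)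
  obtain ⟨i1, s1⟩ := shear_aux e4 _ B (hPi (-e4 * x) f3) hBi
  obtain ⟨i2, s2⟩ := shear_aux e3 _ _ hQi i1
  obtain ⟨i3, s3⟩ := shear_aux e2 _ _ (hPi (-e2 * x) f1) i2
  rw [s2, s1] at s3
  have key : ∀ k : ℝ, Complex.exp (Complex.I * (x : ℂ) * (k : ℂ)) *
      (Complex.exp (Complex.I * (t : ℂ) * (k : ℂ) ^ 2) * Tform t 1 e2 e3 e4 b f1 f2 f3 k) =
      ∫ l, P (-e2 * x) f1 l * ∫ m, (starRingEnd ℂ) (P (e3 * x) f2 m) *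
        ∫ n, P (-e4 * x) f3 n * B (k + e2 * l + e3 * m + e4 * n) := fun k => by
    unfold Tform
    simp_rw [← integral_const_mul]
    congr 1; ext l; congr 1; ext m; congr 1; ext n
    simp only [hP, hB, map_mul, ← Complex.exp_conj, Complex.conj_I, Complex.conj_ofReal, map_pow,
      one_mul]
    have hE : Complex.exp (Complex.I * (x : ℂ) * (k : ℂ)) *
        Complex.exp (Complex.I * (t : ℂ) * (k : ℂ) ^ 2) *
        Complex.exp (Complex.I * (t : ℂ) * ((-(k ^ 2) + l ^ 2 - m ^ 2 + n ^ 2 : ℝ) : ℂ)) =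
        Complex.exp (Complex.I * ((-e2 * x : ℝ) : ℂ) * (l : ℂ)) *
        Complex.exp (Complex.I * (t : ℂ) * (l : ℂ) ^ 2) *
        (Complex.exp (-Complex.I * ((e3 * x : ℝ) : ℂ) * (m : ℂ)) *
        Complex.exp (-Complex.I * (t : ℂ) * (m : ℂ) ^ 2)) *
        (Complex.exp (Complex.I * ((-e4 * x : ℝ) : ℂ) * (n : ℂ)) *
        Complex.exp (Complex.I * (t : ℂ) * (n : ℂ) ^ 2)) *
        Complex.exp (Complex.I * (x : ℂ) * ((k + e2 * l + e3 * m + e4 * n : ℝ) : ℂ)) := by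
      simp only [← Complex.exp_add]
      congr 1
      push_cast
      ring
    linear_combination (f1 l * (starRingEnd ℂ) (f2 m) * f3 n *
      b (k + e2 * l + e3 * m + e4 * n)) * hE
  have hfe : ∀ y f, freeEvol t (f : SchwartzMap ℝ ℂ) y =
      (Real.sqrt (2 * Real.pi) : ℂ)⁻¹ * ∫ l, P y f l := fun y f => by
    simp only [freeEvol, hP]
  have hb : invFT b x = (Real.sqrt (2 * Real.pi) : ℂ)⁻¹ * ∫ l, B l := by
    simp only [invFT, hB]
  rw [hfe, hfe, hfe, hb, invFT]
  simp_rw [key]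
  rw [s3, map_mul, ← integral_conj, map_inv₀, Complex.conj_ofReal]
  have hpos : (0:ℝ) < Real.sqrt (2 * Real.pi) := by positivity
  have hpow : (2 * Real.pi) ^ ((3:ℝ)/2) = Real.sqrt (2 * Real.pi) ^ 3 := by
    rw [Real.sqrt_eq_rpow, ← Real.rpow_natCast, ← Real.rpow_mul (by positivity)]
    norm_num
  rw [hpow]
  have hne : (Real.sqrt (2 * Real.pi) : ℂ) ≠ 0 := by exact_mod_cast hpos.ne'
  rw [Complex.ofReal_pow]
  generalize (Real.sqrt (2 * Real.pi) : ℂ) = r at *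
  field_simp
end

section
/- Assume ∫⟨y⟩²|V(y)|dy < ∞ and that V is non-generic, i.e. ∫_ℝ V(y) m₊(y,0) dy = 0. Then the limit a := lim_{x→−∞} m₊(x,0) exists, is real and nonzero, and the transmission and reflection coefficients satisfy lim_{k→0} T(k) = 2a/(1+a²), lim_{k→0} R₊(k) = (1−a²)/(1+a²), and lim_{k→0} R₋(k) = (a²−1)/(1+a²). -/
open MeasureTheory Filter Topology Set

noncomputable def jap (x : ℝ) : ℝ := Real.sqrt (1 + x ^ 2)

/-- The kernel `D_k(z) = (e^{2ikz} - 1)/(2ik)` for `k ≠ 0`, and `D_0(z) = z`. -/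
noncomputable def Dker (k z : ℝ) : ℂ :=
  if k = 0 then (z : ℂ)
  else (Complex.exp (2 * Complex.I * (k : ℂ) * (z : ℂ)) - 1) / (2 * Complex.I * (k : ℂ))

/-- `m` is, for each `k`, the unique bounded solution of the Volterra equation
`m₊(x,k) = 1 + ∫_x^∞ D_k(y−x) V(y) m₊(y,k) dy`. -/
def IsJostPlus (V : ℝ → ℝ) (m : ℝ → ℝ → ℂ) : Prop :=
  ∀ k : ℝ, (∃ C : ℝ, ∀ x : ℝ, ‖m x k‖ ≤ C) ∧
    ∀ x : ℝ, m x k = 1 + ∫ y in Set.Ioi x, Dker k (y - x) * (V y : ℂ) * m y k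

/-- `m` is, for each `k`, the unique bounded solution of the Volterra equation
`m₋(x,k) = 1 + ∫_{−∞}^x D_k(x−y) V(y) m₋(y,k) dy`. -/
def IsJostMinus (V : ℝ → ℝ) (m : ℝ → ℝ → ℂ) : Prop :=
  ∀ k : ℝ, (∃ C : ℝ, ∀ x : ℝ, ‖m x k‖ ≤ C) ∧
    ∀ x : ℝ, m x k = 1 + ∫ y in Set.Iic x, Dker k (x - y) * (V y : ℂ) * m y k

/-- `1/T(k) = 1 − (2ik)⁻¹ ∫ V(y) m₊(y,k) dy`. -/
noncomputable def Tinv (V : ℝ → ℝ) (mp : ℝ → ℝ → ℂ) (k : ℝ) : ℂ :=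
  1 - (2 * Complex.I * (k : ℂ))⁻¹ * ∫ y : ℝ, (V y : ℂ) * mp y k

/-- The transmission coefficient `T(k)`. -/
noncomputable def Tcoef (V : ℝ → ℝ) (mp : ℝ → ℝ → ℂ) (k : ℝ) : ℂ :=
  (Tinv V mp k)⁻¹

/-- The reflection coefficient `R₊(k) = T(k)·(2ik)⁻¹ ∫ e^{−2iky} V(y) m₋(y,k) dy`. -/
noncomputable def Rp (V : ℝ → ℝ) (mp mm : ℝ → ℝ → ℂ) (k : ℝ) : ℂ :=
  Tcoef V mp k * ((2 * Complex.I * (k : ℂ))⁻¹ *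
    ∫ y : ℝ, Complex.exp (-2 * Complex.I * (k : ℂ) * (y : ℂ)) * (V y : ℂ) * mm y k)

/-- The reflection coefficient `R₋(k) = T(k)·(2ik)⁻¹ ∫ e^{2iky} V(y) m₊(y,k) dy`. -/
noncomputable def Rm (V : ℝ → ℝ) (mp mm : ℝ → ℝ → ℂ) (k : ℝ) : ℂ :=
  Tcoef V mp k * ((2 * Complex.I * (k : ℂ))⁻¹ *
    ∫ y : ℝ, Complex.exp (2 * Complex.I * (k : ℂ) * (y : ℂ)) * (V y : ℂ) * mp y k)

lemma Dker_zero (z : ℝ) : Dker 0 z = z := by simp [Dker]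

lemma Dker_ne {k : ℝ} (hk : k ≠ 0) (z : ℝ) : Dker k z =
    (Complex.exp (2 * Complex.I * (k : ℂ) * (z : ℂ)) - 1) / (2 * Complex.I * (k : ℂ)) := by
  simp [Dker, hk]

lemma norm_2ik (k : ℝ) : ‖(2 * Complex.I * (k : ℂ))‖ = 2 * |k| := by
  simp

lemma ne_2ik {k : ℝ} (hk : k ≠ 0) : (2 * Complex.I * (k : ℂ)) ≠ 0 := by
  simp [hk]

lemma Dker_norm_le (k z : ℝ) : ‖Dker k z‖ ≤ |z| := by
  by_cases hk : k = 0
  · subst hk; simp [Dker_zero]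
  · rw [Dker_ne hk, norm_div, norm_2ik]
    have hk' : 0 < |k| := abs_pos.mpr hk
    rw [div_le_iff₀ (by positivity)]
    have h := @Real.norm_exp_I_mul_ofReal_sub_one_le (2 * k * z)
    have e : Complex.I * ((2 * k * z : ℝ) : ℂ) = 2 * Complex.I * (k : ℂ) * (z : ℂ) := by
      push_cast; ring
    rw [e] at h
    refine h.trans (le_of_eq ?_)
    rw [Real.norm_eq_abs, abs_mul, abs_mul, abs_two]; ring

/-- The second-order kernel `E_k(w) = (D_k(w) - w)/(2ik)`. -/
noncomputable def Eker (k w : ℝ) : ℂ := (Dker k w - w) / (2 * Complex.I * (k : ℂ))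

lemma exp_sub_bound (θ : ℝ) : ‖Complex.exp (Complex.I * θ) - 1 - Complex.I * θ‖ ≤ 2 * θ ^ 2 := by
  have hn : ‖Complex.I * (θ : ℂ)‖ = |θ| := by simp
  by_cases h : |θ| ≤ 1
  · have := Complex.norm_exp_sub_one_sub_id_le (x := Complex.I * θ) (by rw [hn]; exact h)
    rw [hn, sq_abs] at this
    nlinarith [sq_nonneg θ]
  · push Not at h
    have h1 := @Real.norm_exp_I_mul_ofReal_sub_one_le θ
    have h2 := norm_sub_le (Complex.exp (Complex.I * θ) - 1) (Complex.I * θ)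
    rw [hn] at h2
    rw [Real.norm_eq_abs] at h1
    nlinarith [sq_abs θ]

lemma Eker_eq {k : ℝ} (hk : k ≠ 0) (w : ℝ) : Eker k w =
    (Complex.exp (Complex.I * ((2 * k * w : ℝ) : ℂ)) - 1 - Complex.I * ((2 * k * w : ℝ) : ℂ)) /
      (2 * Complex.I * (k : ℂ)) ^ 2 := by
  have := ne_2ik hk
  have e : Complex.I * ((2 * k * w : ℝ) : ℂ) = 2 * Complex.I * (k : ℂ) * (w : ℂ) := by
    push_cast; ring
  have hk' : (k : ℂ) ≠ 0 := by exact_mod_cast hk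
  rw [Eker, Dker_ne hk, e]
  field_simp

lemma Eker_norm_le (k w : ℝ) : ‖Eker k w‖ ≤ 2 * w ^ 2 := by
  by_cases hk : k = 0
  · subst hk; simp [Eker]; positivity
  · have hk' : 0 < |k| := abs_pos.mpr hk
    rw [Eker_eq hk, norm_div, norm_pow, norm_2ik, div_le_iff₀ (by positivity)]
    refine (exp_sub_bound _).trans (le_of_eq ?_)
    rw [mul_pow, mul_pow, mul_pow, sq_abs]; ring

lemma Dker_sub_norm_le (k z : ℝ) : ‖Dker k z - Dker 0 z‖ ≤ 4 * |k| * z ^ 2 := by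
  by_cases hk : k = 0
  · subst hk; simp
  · have h := Eker_norm_le k z
    have hk' : 0 < |k| := abs_pos.mpr hk
    rw [Eker, norm_div, norm_2ik, div_le_iff₀ (by positivity)] at h
    rw [Dker_zero]
    linarith

lemma Eker_tendsto (w : ℝ) : Tendsto (fun k => Eker k w) (𝓝[≠] (0:ℝ)) (𝓝 ((w : ℂ) ^ 2 / 2)) := by
  rw [tendsto_iff_norm_sub_tendsto_zero]
  have hlim : Tendsto (fun k : ℝ => 2 * |k| * |w| ^ 3) (𝓝[≠] (0:ℝ)) (𝓝 0) := by
    have : Tendsto (fun k : ℝ => 2 * |k| * |w| ^ 3) (𝓝 0) (𝓝 (2 * |(0:ℝ)| * |w| ^ 3)) := by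
      apply Continuous.tendsto; fun_prop
    simp only [abs_zero, mul_zero, zero_mul] at this
    exact this.mono_left nhdsWithin_le_nhds
  have hsmall : ∀ᶠ k : ℝ in 𝓝[≠] (0:ℝ), |2 * k * w| < 1 := by
    have : Tendsto (fun k : ℝ => |2 * k * w|) (𝓝 0) (𝓝 |2 * 0 * w|) := by
      apply Continuous.tendsto; fun_prop
    simp only [mul_zero, zero_mul, abs_zero] at this
    exact (this.mono_left nhdsWithin_le_nhds).eventually_lt_const one_pos
  refine squeeze_zero' (Eventually.of_forall fun _ => norm_nonneg _) ?_ hlim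
  filter_upwards [hsmall, self_mem_nhdsWithin] with k hk hk0
  have hk0 : k ≠ 0 := hk0
  have hk' : 0 < |k| := abs_pos.mpr hk0
  have hn : ‖Complex.I * ((2 * k * w : ℝ) : ℂ)‖ = |2 * k * w| := by
    rw [norm_mul, Complex.norm_I, one_mul, Complex.norm_real, Real.norm_eq_abs]
  have hb := Complex.exp_bound (x := Complex.I * ((2 * k * w : ℝ) : ℂ)) (by rw [hn]; exact hk.le)
    (n := 3) (by norm_num)
  rw [hn] at hb
  have e : Eker k w - (w : ℂ) ^ 2 / 2 = (Complex.exp (Complex.I * ((2 * k * w : ℝ) : ℂ)) -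
      ∑ m ∈ Finset.range 3, (Complex.I * ((2 * k * w : ℝ) : ℂ)) ^ m / (m.factorial : ℂ)) /
      (2 * Complex.I * (k : ℂ)) ^ 2 := by
    have := ne_2ik hk0
    rw [Eker_eq hk0, eq_div_iff (pow_ne_zero _ this), sub_mul, div_mul_cancel₀ _ (pow_ne_zero _ this)]
    simp [Finset.sum_range_succ, Nat.factorial]
    ring
  rw [e, norm_div, norm_pow, norm_2ik, div_le_iff₀ (by positivity)]
  refine hb.trans ?_
  rw [abs_mul, abs_mul, abs_two, mul_pow, mul_pow]
  norm_num [Nat.factorial]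
  have : 0 ≤ |k| ^ 3 * |w| ^ 3 := by positivity
  nlinarith

lemma Dker_tendsto (z : ℝ) : Tendsto (fun k => Dker k z) (𝓝[≠] (0:ℝ)) (𝓝 (z : ℂ)) := by
  rw [tendsto_iff_norm_sub_tendsto_zero]
  have hlim : Tendsto (fun k : ℝ => 4 * |k| * z ^ 2) (𝓝[≠] (0:ℝ)) (𝓝 0) := by
    have : Tendsto (fun k : ℝ => 4 * |k| * z ^ 2) (𝓝 0) (𝓝 (4 * |(0:ℝ)| * z ^ 2)) := by
      apply Continuous.tendsto; fun_prop
    simp only [abs_zero, mul_zero, zero_mul] at this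
    exact this.mono_left nhdsWithin_le_nhds
  refine squeeze_zero (fun _ => norm_nonneg _) (fun k => ?_) hlim
  have := Dker_sub_norm_le k z
  rwa [Dker_zero] at this

lemma Dker_continuous (k : ℝ) : Continuous (Dker k) := by
  by_cases hk : k = 0
  · subst hk
    have : Dker 0 = fun z : ℝ => (z : ℂ) := by ext z; exact Dker_zero z
    rw [this]; fun_prop
  · have : Dker k = fun z : ℝ => (Complex.exp (2 * Complex.I * (k : ℂ) * (z : ℂ)) - 1) /
        (2 * Complex.I * (k : ℂ)) := by ext z; exact Dker_ne hk z
    rw [this]; fun_prop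

lemma Eker_continuous (k : ℝ) : Continuous (Eker k) := by
  have := Dker_continuous k
  unfold Eker
  fun_prop

lemma Dker_zeros_countable (k : ℝ) : {z : ℝ | Dker k z = 0}.Countable := by
  by_cases hk : k = 0
  · subst hk
    have : {z : ℝ | Dker 0 z = 0} = {0} := by ext z; simp [Dker_zero]
    rw [this]; exact countable_singleton 0
  · refine (countable_range (fun n : ℤ => n * Real.pi / k)).mono ?_
    intro z hz
    simp only [mem_ofPred_eq] at hz
    rw [Dker_ne hk, div_eq_zero_iff, or_iff_left (ne_2ik hk), sub_eq_zero,
      Complex.exp_eq_one_iff] at hz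
    obtain ⟨n, hn⟩ := hz
    refine ⟨n, ?_⟩
    have hI := Complex.I_ne_zero
    have h2 : (2 * Complex.I) * ((k * z : ℝ) : ℂ) = (2 * Complex.I) * ((n * Real.pi : ℝ) : ℂ) := by
      push_cast
      linear_combination hn
    have h3 := mul_left_cancel₀ (by simp) h2
    have h4 : k * z = n * Real.pi := by exact_mod_cast h3
    simp only
    rw [← h4]; field_simp

lemma integral_Ioi_continuous {w : ℝ → ℝ} (hw : Integrable w) :
    Continuous (fun x => ∫ y in Ioi x, w y) := by
  have : (fun x => ∫ y in Ioi x, w y) = fun x => (∫ y in Ioi (0:ℝ), w y) - ∫ y in (0:ℝ)..x, w y := by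
    ext x
    rw [← intervalIntegral.integral_interval_add_Ioi (a := 0) (b := x) hw.integrableOn hw.integrableOn]
    ring
  rw [this]
  exact continuous_const.sub (intervalIntegral.continuous_primitive
    (fun a b => hw.intervalIntegrable) 0)

lemma integral_Ioi_tendsto {w : ℝ → ℝ} {x : ℝ} (hw : IntegrableOn w (Ioi x)) :
    Tendsto (fun x => ∫ y in Ioi x, w y) atTop (𝓝 0) := by
  have h := intervalIntegral_tendsto_integral_Ioi x hw tendsto_id
  have h2 : Tendsto (fun b => (∫ y in Ioi x, w y) - ∫ y in x..b, w y) atTop (𝓝 0) := by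
    simpa using (tendsto_const_nhds (x := ∫ y in Ioi x, w y)).sub h
  refine h2.congr' ?_
  filter_upwards [eventually_ge_atTop x] with b hb
  rw [← intervalIntegral.integral_interval_add_Ioi (a := x) (b := b) hw
    (hw.mono_set (Ioi_subset_Ioi hb))]
  ring

/-- Backward Gronwall inequality on a half-line. -/
lemma gronwall {w φ : ℝ → ℝ} (hw : Integrable w) (hw0 : ∀ y, 0 ≤ w y) (hφ0 : ∀ y, 0 ≤ φ y)
    {x₀ A : ℝ} (hA : 0 ≤ A) (hwφ : IntegrableOn (fun y => w y * φ y) (Ioi x₀))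
    (h : ∀ x, x₀ ≤ x → φ x ≤ A + ∫ y in Ioi x, w y * φ y) :
    φ x₀ ≤ 2 ^ (⌈2 * ∫ y, w y⌉₊) * A := by
  set Φ : ℝ → ℝ := fun x => A + ∫ y in Ioi x, w y * φ y with hΦ
  set W : ℝ → ℝ := fun x => ∫ y in Ioi x, w y with hW
  have hint : ∀ x, x₀ ≤ x → IntegrableOn (fun y => w y * φ y) (Ioi x) := fun x hx =>
    hwφ.mono_set (Ioi_subset_Ioi hx)
  have hsplit : ∀ x y, x₀ ≤ x → x ≤ y → Φ x = Φ y + ∫ t in Ioc x y, w t * φ t := by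
    intro x y hx hxy
    simp only [hΦ]
    rw [← intervalIntegral.integral_interval_add_Ioi (a := x) (b := y) (hint x hx)
      (hint y (hx.trans hxy)), intervalIntegral.integral_of_le hxy]
    ring
  have hanti : ∀ x y, x₀ ≤ x → x ≤ y → Φ y ≤ Φ x := by
    intro x y hx hxy
    rw [hsplit x y hx hxy]
    have : 0 ≤ ∫ t in Ioc x y, w t * φ t :=
      setIntegral_nonneg measurableSet_Ioc fun t _ => mul_nonneg (hw0 t) (hφ0 t)
    linarith
  have hΦ0 : ∀ x, x₀ ≤ x → 0 ≤ Φ x := fun x hx => (hφ0 x).trans (h x hx)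
  have hWsplit : ∀ x y, x ≤ y → W x = W y + ∫ t in Ioc x y, w t := by
    intro x y hxy
    simp only [hW]
    rw [← intervalIntegral.integral_interval_add_Ioi (a := x) (b := y) hw.integrableOn
      hw.integrableOn, intervalIntegral.integral_of_le hxy]
    ring
  have hstep : ∀ x y, x₀ ≤ x → x ≤ y → Φ x ≤ Φ y + Φ x * (W x - W y) := by
    intro x y hx hxy
    have h1 : ∫ t in Ioc x y, w t * φ t ≤ ∫ t in Ioc x y, w t * Φ x := by
      refine setIntegral_mono_on ((hint x hx).mono_set Ioc_subset_Ioi_self)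
        (hw.integrableOn.mul_const _) measurableSet_Ioc ?_
      intro t ht
      refine mul_le_mul_of_nonneg_left ?_ (hw0 t)
      exact (h t (hx.trans ht.1.le)).trans (hanti x t hx ht.1.le)
    rw [integral_mul_const] at h1
    have h2 := hsplit x y hx hxy
    have h3 := hWsplit x y hxy
    have h4 : ∫ t in Ioc x y, w t = W x - W y := by linarith
    rw [h4] at h1
    linarith
  have hΦlim : Tendsto Φ atTop (𝓝 A) := by
    simpa using (tendsto_const_nhds (x := A)).add (integral_Ioi_tendsto hwφ)
  have hWlim : Tendsto W atTop (𝓝 0) := integral_Ioi_tendsto (x := 0) hw.integrableOn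
  have hWcont : Continuous W := integral_Ioi_continuous hw
  have hW0 : ∀ x, 0 ≤ W x := fun x => setIntegral_nonneg measurableSet_Ioi fun t _ => hw0 t
  have key : ∀ n : ℕ, ∀ x, x₀ ≤ x → W x ≤ n / 2 → Φ x ≤ 2 ^ n * A := by
    intro n
    induction n with
    | zero =>
      intro x hx hWx
      have hWx : W x = 0 := le_antisymm (by simpa using hWx) (hW0 x)
      have : ∀ᶠ y in atTop, Φ x ≤ Φ y := by
        filter_upwards [eventually_ge_atTop x] with y hy
        have h1 := hstep x y hx hy
        have h2 : W x - W y ≤ 0 := by linarith [hW0 y]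
        nlinarith [hΦ0 x hx]
      simpa using ge_of_tendsto hΦlim this
    | succ n ih =>
      intro x hx hWx
      by_cases hs : W x ≤ 1 / 2
      · have : ∀ᶠ y in atTop, Φ x ≤ 2 * Φ y := by
          filter_upwards [eventually_ge_atTop x] with y hy
          have h1 := hstep x y hx hy
          have h2 : W x - W y ≤ 1 / 2 := by linarith [hW0 y]
          nlinarith [hΦ0 x hx]
        have h3 : Φ x ≤ 2 * A := ge_of_tendsto (hΦlim.const_mul 2) this
        refine h3.trans ?_
        rw [pow_succ]
        have : (1:ℝ) ≤ 2 ^ n := one_le_pow₀ (by norm_num)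
        nlinarith
      · push Not at hs
        obtain ⟨z, hz1, hz2⟩ : ∃ z, W z < W x - 1 / 2 ∧ x ≤ z :=
          ((hWlim.eventually_lt_const (by linarith : (0:ℝ) < W x - 1 / 2)).and
            (eventually_ge_atTop x)).exists
        obtain ⟨y, hy, hWy⟩ := intermediate_value_Icc' hz2 hWcont.continuousOn
          (show W x - 1 / 2 ∈ Icc (W z) (W x) from ⟨hz1.le, by linarith⟩)
        have h1 := hstep x y hx hy.1
        have h2 := ih y (hx.trans hy.1) (by rw [hWy]; push_cast at hWx; linarith)
        rw [hWy] at h1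
        rw [pow_succ]
        linarith
  have hWle : W x₀ ≤ ∫ y, w y := setIntegral_le_integral hw (Eventually.of_forall hw0)
  refine (h x₀ le_rfl).trans (key _ x₀ le_rfl ?_)
  have := Nat.le_ceil (2 * ∫ y, w y)
  linarith

lemma intW {V : ℝ → ℝ} (hV : Integrable (fun y : ℝ => (1 + |y|) ^ 2 * V y)) {h : ℝ → ℂ}
    (hm : AEStronglyMeasurable (fun y => (V y : ℂ) * h y)) {c : ℝ → ℂ} (hc : Continuous c)
    {B : ℝ} (hB : ∀ y, ‖c y‖ * ‖h y‖ ≤ B * (1 + |y|) ^ 2) :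
    Integrable (fun y => c y * ((V y : ℂ) * h y)) := by
  refine Integrable.mono' (hV.norm.const_mul B) (hc.aestronglyMeasurable.mul hm) ?_
  refine Eventually.of_forall fun y => ?_
  rw [norm_mul, norm_mul, Complex.norm_real, norm_mul, norm_pow]
  have : ‖1 + |y|‖ = 1 + |y| := by rw [Real.norm_of_nonneg]; positivity
  rw [this]
  have := mul_le_mul_of_nonneg_right (hB y) (norm_nonneg (V y))
  linarith

noncomputable def pw (x : ℝ) : ℝ := 1 + max (-x) 0

lemma pw_pos (x : ℝ) : 0 < pw x := by unfold pw; positivity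

lemma pw_ge_one (x : ℝ) : 1 ≤ pw x := by
  unfold pw; linarith [le_max_right (-x) 0]

lemma pw_le (x : ℝ) : pw x ≤ 1 + |x| := by
  unfold pw
  have : max (-x) 0 ≤ |x| := max_le (neg_le_abs x) (abs_nonneg x)
  linarith

lemma pw_cont : Continuous pw := by unfold pw; fun_prop

lemma pw_anti {x y : ℝ} (h : x ≤ y) : pw y ≤ pw x := by
  unfold pw
  have := max_le_max_right 0 (neg_le_neg h)
  linarith

lemma pw_ineq {x y : ℝ} (h : x ≤ y) : (y - x) * pw y ≤ pw x * (1 + |y|) := by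
  unfold pw
  rcases le_total 0 y with hy | hy
  · rw [max_eq_right (by linarith : -y ≤ 0), abs_of_nonneg hy]
    have := le_max_left (-x) 0
    have := le_max_right (-x) 0
    nlinarith
  · rw [max_eq_left (by linarith : 0 ≤ -y), abs_of_nonpos hy, max_eq_left (by linarith : 0 ≤ -x)]
    nlinarith

noncomputable def CV (V : ℝ → ℝ) : ℝ := 2 ^ (⌈2 * ∫ y, (1 + |y|) * |V y|⌉₊)

lemma CV_nonneg (V : ℝ → ℝ) : 0 ≤ CV V := by unfold CV; positivity

lemma int1 {V : ℝ → ℝ} (hVm : Measurable V) (hV : Integrable (fun y : ℝ => (1 + |y|) ^ 2 * V y)) :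
    Integrable (fun y : ℝ => (1 + |y|) * |V y|) := by
  refine Integrable.mono' hV.norm ?_ ?_
  · exact ((by fun_prop : Measurable fun y : ℝ => (1 + |y|)).mul
      (by fun_prop : Measurable fun y => |V y|)).aestronglyMeasurable
  · refine Eventually.of_forall fun y => ?_
    rw [norm_mul, norm_mul, norm_pow, Real.norm_eq_abs, Real.norm_eq_abs, Real.norm_eq_abs, abs_abs]
    refine mul_le_mul_of_nonneg_right ?_ (abs_nonneg _)
    have : abs (1 + |y|) = 1 + |y| := abs_of_nonneg (by positivity)
    rw [this]
    nlinarith [abs_nonneg y]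

lemma wbound {V : ℝ → ℝ} (hVm : Measurable V)
    (hV : Integrable (fun y : ℝ => (1 + |y|) ^ 2 * V y)) {h : ℝ → ℂ}
    (hm : AEStronglyMeasurable (fun y => (V y : ℂ) * h y)) {C : ℝ} (hC : ∀ x, ‖h x‖ ≤ C)
    (k : ℝ) (F : ℝ → ℂ) {A x₀ : ℝ} (hA : 0 ≤ A) (hF : ∀ x, x₀ ≤ x → ‖F x‖ ≤ A * pw x)
    (heq : ∀ x, h x = F x + ∫ y in Ioi x, Dker k (y - x) * (V y : ℂ) * h y) :
    ‖h x₀‖ ≤ CV V * A * pw x₀ := by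
  have hw := int1 hVm hV
  have hC0 : 0 ≤ C := (norm_nonneg _).trans (hC 0)
  have hint : Integrable (fun y => (1 + |y|) * |V y| * (‖h y‖ / pw y)) := by
    refine Integrable.mono' (hw.const_mul C) ?_ ?_
    · have e : (fun y => (1 + |y|) * |V y| * (‖h y‖ / pw y)) =
          fun y => ((1 + |y|) / pw y) * ‖(V y : ℂ) * h y‖ := by
        ext y
        rw [norm_mul, Complex.norm_real, Real.norm_eq_abs]
        ring
      rw [e]
      have hc : Continuous fun y : ℝ => (1 + |y|) / pw y :=
        (by fun_prop : Continuous fun y : ℝ => 1 + |y|).div pw_cont fun y => (pw_pos y).ne'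
      exact hc.aestronglyMeasurable.mul hm.norm
    · refine Eventually.of_forall fun y => ?_
      have h1 : ‖h y‖ / pw y ≤ C :=
        (div_le_self (norm_nonneg _) (pw_ge_one y)).trans (hC y)
      have h2 : 0 ≤ ‖h y‖ / pw y := div_nonneg (norm_nonneg _) (pw_pos y).le
      have h3 : 0 ≤ (1 + |y|) * |V y| := by positivity
      rw [Real.norm_of_nonneg (mul_nonneg h3 h2), mul_comm C]
      exact mul_le_mul_of_nonneg_left h1 h3
  have key := gronwall (w := fun y => (1 + |y|) * |V y|) (φ := fun x => ‖h x‖ / pw x) (x₀ := x₀)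
    hw (fun y => by positivity) (fun y => div_nonneg (norm_nonneg _) (pw_pos y).le) hA
    hint.integrableOn ?_
  · rw [div_le_iff₀ (pw_pos x₀)] at key
    exact key
  · intro x hx
    rw [div_le_iff₀ (pw_pos x)]
    rw [heq x]
    refine (norm_add_le _ _).trans ?_
    rw [add_mul]
    refine add_le_add (hF x hx) ?_
    rw [mul_comm, ← integral_const_mul]
    refine norm_integral_le_of_norm_le (hint.integrableOn.const_mul _) ?_
    refine (ae_restrict_iff' measurableSet_Ioi).mpr (Eventually.of_forall fun y hy => ?_)
    have hxy : x < y := hy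
    have h1 := Dker_norm_le k (y - x)
    rw [abs_of_nonneg (by linarith)] at h1
    rw [norm_mul, norm_mul, Complex.norm_real, Real.norm_eq_abs]
    have h2 := pw_ineq hxy.le
    have hp := pw_pos y
    have e : pw x * ((1 + |y|) * |V y| * (‖h y‖ / pw y)) =
      (pw x * (1 + |y|) / pw y) * (|V y| * ‖h y‖) := by ring
    rw [e, mul_assoc]
    refine mul_le_mul_of_nonneg_right (h1.trans ?_) (by positivity)
    rw [le_div_iff₀ hp]
    exact h2

lemma aesm_of_ioi {k x : ℝ} {g : ℝ → ℂ}
    (h : AEStronglyMeasurable (fun y => Dker k (y - x) * g y) (volume.restrict (Ioi x))) :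
    AEStronglyMeasurable g (volume.restrict (Ioi x)) := by
  have hc : Measurable (fun y => (Dker k (y - x))⁻¹) :=
    ((Dker_continuous k).comp (continuous_id.sub continuous_const)).measurable.inv
  refine (hc.aestronglyMeasurable.mul h).congr ?_
  refine ae_restrict_of_ae ?_
  have hcount : {y : ℝ | Dker k (y - x) = 0}.Countable :=
    (Dker_zeros_countable k).preimage (sub_left_injective (b := x))
  filter_upwards [hcount.ae_notMem volume] with y hy
  have hy : Dker k (y - x) ≠ 0 := hy
  simp only [Pi.mul_apply]
  field_simp

lemma Dker_shift_cont (k x : ℝ) : Continuous (fun y => Dker k (y - x)) :=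
  (Dker_continuous k).comp (continuous_id.sub continuous_const)

lemma Dker_shift_bound (k x y : ℝ) : ‖Dker k (y - x)‖ ≤ (1 + |x|) * (1 + |y|) := by
  refine (Dker_norm_le k _).trans ((abs_sub y x).trans ?_)
  nlinarith [abs_nonneg x, abs_nonneg y]

/-- A bounded solution of the Volterra equation is automatically measurable on the support of `V`. -/
lemma jost_aesm {V : ℝ → ℝ} (hVm : Measurable V)
    (hV : Integrable (fun y : ℝ => (1 + |y|) ^ 2 * V y)) {h : ℝ → ℂ} {C : ℝ} (hC : ∀ x, ‖h x‖ ≤ C)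
    (k : ℝ) (heq : ∀ x, h x = 1 + ∫ y in Ioi x, Dker k (y - x) * (V y : ℂ) * h y) :
    AEStronglyMeasurable (fun y => (V y : ℂ) * h y) := by
  set g : ℝ → ℂ := fun y => (V y : ℂ) * h y with hg
  have hC0 : 0 ≤ C := (norm_nonneg _).trans (hC 0)
  set U : Set ℝ := {x | AEStronglyMeasurable g (volume.restrict (Ioi x))} with hU
  have hup : ∀ x y, x ∈ U → x ≤ y → y ∈ U := fun x y hx hxy =>
    hx.mono_measure (Measure.restrict_mono (Ioi_subset_Ioi hxy) le_rfl)
  have hone : ∀ x, x ∉ U → h x = 1 := by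
    intro x hx
    rw [heq x, integral_undef, add_zero]
    intro hint
    apply hx
    refine aesm_of_ioi (k := k) ?_
    simpa [hg, mul_assoc] using hint.aestronglyMeasurable
  have hUord : U.OrdConnected := ⟨fun x hx y hy z hz => hup x z hx hz.1⟩
  have hUmeas : MeasurableSet U := hUord.measurableSet
  have hcov : (univ : Set ℝ) = (⋃ q : {q : ℚ // (q : ℝ) ∈ U}, Ioi ((q : ℚ) : ℝ)) ∪
      ((U \ ⋃ q : {q : ℚ // (q : ℝ) ∈ U}, Ioi ((q : ℚ) : ℝ)) ∪ Uᶜ) := by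
    ext x
    simp only [mem_univ, mem_union, Set.mem_sdiff, mem_compl_iff, true_iff]
    tauto
  rw [← Measure.restrict_univ (μ := (volume : Measure ℝ)), hcov, aestronglyMeasurable_union_iff,
    aestronglyMeasurable_union_iff, aestronglyMeasurable_iUnion_iff]
  refine ⟨fun q => q.2, ?_, ?_⟩
  · have hsub : (U \ ⋃ q : {q : ℚ // (q : ℝ) ∈ U}, Ioi ((q : ℚ) : ℝ)).Subsingleton := by
      have aux : ∀ x ∈ (U \ ⋃ q : {q : ℚ // (q : ℝ) ∈ U}, Ioi ((q : ℚ) : ℝ)),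
          ∀ y ∈ (U \ ⋃ q : {q : ℚ // (q : ℝ) ∈ U}, Ioi ((q : ℚ) : ℝ)), ¬ x < y := by
        intro x hx y hy hxy
        obtain ⟨q, hq1, hq2⟩ := exists_rat_btwn hxy
        exact hy.2 (mem_iUnion.mpr ⟨⟨q, hup x q hx.1 hq1.le⟩, hq2⟩)
      intro x hx y hy
      exact le_antisymm (not_lt.mp (aux y hy x hx)) (not_lt.mp (aux x hx y hy))
    have h0 : volume (U \ ⋃ q : {q : ℚ // (q : ℝ) ∈ U}, Ioi ((q : ℚ) : ℝ)) = 0 :=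
      hsub.countable.measure_zero _
    rw [Measure.restrict_eq_zero.mpr h0]
    exact aestronglyMeasurable_zero_measure g
  · have hVa : AEStronglyMeasurable (fun y => (V y : ℂ)) (volume.restrict Uᶜ) :=
      (Complex.measurable_ofReal.comp hVm).aestronglyMeasurable
    refine hVa.congr ?_
    refine (ae_restrict_iff' hUmeas.compl).mpr (Eventually.of_forall fun y hy => ?_)
    simp [hg, hone y hy]

lemma homog_zero {V : ℝ → ℝ} (hVm : Measurable V)
    (hV : Integrable (fun y : ℝ => (1 + |y|) ^ 2 * V y)) {h : ℝ → ℂ}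
    (hm : AEStronglyMeasurable (fun y => (V y : ℂ) * h y)) {C : ℝ} (hC : ∀ x, ‖h x‖ ≤ C)
    (heq : ∀ x, h x = ∫ y in Ioi x, Dker 0 (y - x) * (V y : ℂ) * h y) (x : ℝ) : h x = 0 := by
  have := wbound hVm hV hm hC 0 (fun _ => 0) (A := 0) (x₀ := x) le_rfl (by simp)
    (by simpa using heq)
  simpa using this

lemma jost_ub {V : ℝ → ℝ} (hVm : Measurable V)
    (hV : Integrable (fun y : ℝ => (1 + |y|) ^ 2 * V y)) {m : ℝ → ℝ → ℂ} (hmp : IsJostPlus V m)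
    (k x : ℝ) : ‖m x k‖ ≤ CV V * pw x := by
  obtain ⟨⟨C, hC⟩, heq⟩ := hmp k
  have := wbound hVm hV (jost_aesm hVm hV hC k heq) hC k (fun _ => 1) (A := 1) (x₀ := x)
    zero_le_one (fun y _ => by simpa using pw_ge_one y) heq
  simpa using this

lemma jost_meas {V : ℝ → ℝ} (hVm : Measurable V)
    (hV : Integrable (fun y : ℝ => (1 + |y|) ^ 2 * V y)) {m : ℝ → ℝ → ℂ} (hmp : IsJostPlus V m)
    (k : ℝ) : AEStronglyMeasurable (fun y => (V y : ℂ) * m y k) := by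
  obtain ⟨⟨C, hC⟩, heq⟩ := hmp k
  exact jost_aesm hVm hV hC k heq

lemma jost_int {V : ℝ → ℝ} (hVm : Measurable V)
    (hV : Integrable (fun y : ℝ => (1 + |y|) ^ 2 * V y)) {m : ℝ → ℝ → ℂ} (hmp : IsJostPlus V m)
    (k : ℝ) {c : ℝ → ℂ} (hc : Continuous c) {B : ℝ} (hB : ∀ y, ‖c y‖ ≤ B * (1 + |y|) ^ 2) :
    Integrable (fun y => c y * ((V y : ℂ) * m y k)) := by
  obtain ⟨⟨C, hC⟩, heq⟩ := hmp k
  refine intW hV (jost_aesm hVm hV hC k heq) hc (B := B * C) fun y => ?_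
  have := mul_le_mul (hB y) (hC y) (norm_nonneg _) ((norm_nonneg _).trans (hB y))
  linarith

lemma jost_conv {V : ℝ → ℝ} (hVm : Measurable V)
    (hV : Integrable (fun y : ℝ => (1 + |y|) ^ 2 * V y)) {m : ℝ → ℝ → ℂ} (hmp : IsJostPlus V m)
    (x₀ : ℝ) : Tendsto (fun k => m x₀ k) (𝓝[≠] (0:ℝ)) (𝓝 (m x₀ 0)) := by
  obtain ⟨⟨C, hC⟩, heq0⟩ := hmp 0
  have hC0 : 0 ≤ C := (norm_nonneg _).trans (hC 0)
  set I : ℝ := ∫ y, ‖(1 + |y|) ^ 2 * V y‖ with hI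
  have hI0 : 0 ≤ I := integral_nonneg fun _ => norm_nonneg _
  set B : ℝ := (1 + |x₀|) ^ 2 * C * I with hB
  have hB0 : 0 ≤ B := by positivity
  have hD : ∀ k x, Integrable (fun y => Dker k (y - x) * ((V y : ℂ) * m y 0)) := fun k x =>
    jost_int hVm hV hmp 0 (Dker_shift_cont k x) (B := 1 + |x|) fun y => by
      refine (Dker_shift_bound k x y).trans ?_
      have : 1 + |y| ≤ (1 + |y|) ^ 2 := by nlinarith [abs_nonneg y]
      exact mul_le_mul_of_nonneg_left this (by positivity)
  have hD' : ∀ k x, Integrable (fun y => Dker k (y - x) * ((V y : ℂ) * m y k)) := fun k x =>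
    jost_int hVm hV hmp k (Dker_shift_cont k x) (B := 1 + |x|) fun y => by
      refine (Dker_shift_bound k x y).trans ?_
      have : 1 + |y| ≤ (1 + |y|) ^ 2 := by nlinarith [abs_nonneg y]
      exact mul_le_mul_of_nonneg_left this (by positivity)
  have hmain : ∀ k, ‖m x₀ k - m x₀ 0‖ ≤ CV V * (4 * |k| * B) * pw x₀ := by
    intro k
    obtain ⟨⟨C', hC'⟩, heqk⟩ := hmp k
    have hma : AEStronglyMeasurable (fun y => (V y : ℂ) * (m y k - m y 0)) := by
      have := (jost_meas hVm hV hmp k).sub (jost_meas hVm hV hmp 0)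
      refine this.congr (Eventually.of_forall fun y => ?_)
      simp only [Pi.sub_apply]; ring
    refine wbound hVm hV hma (C := C' + C)
      (fun x => (norm_sub_le _ _).trans (add_le_add (hC' x) (hC x))) k
      (fun x => ∫ y in Ioi x, (Dker k (y - x) - Dker 0 (y - x)) * ((V y : ℂ) * m y 0))
      (by positivity) ?_ ?_
    · intro x hx
      have h1 : ‖∫ y in Ioi x, (Dker k (y - x) - Dker 0 (y - x)) * ((V y : ℂ) * m y 0)‖ ≤
          ∫ y in Ioi x, 4 * |k| * ((1 + |x₀|) ^ 2 * C) * ‖(1 + |y|) ^ 2 * V y‖ := by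
        refine norm_integral_le_of_norm_le (hV.norm.integrableOn.const_mul _) ?_
        refine (ae_restrict_iff' measurableSet_Ioi).mpr (Eventually.of_forall fun y hy => ?_)
        have hxy : x < y := hy
        rw [norm_mul, norm_mul, norm_mul, Complex.norm_real]
        have h2 := Dker_sub_norm_le k (y - x)
        have h3 : y - x ≤ (1 + |x₀|) * (1 + |y|) := by
          have := neg_abs_le x₀
          have := le_abs_self y
          nlinarith [abs_nonneg x₀, abs_nonneg y]
        have h4 : (y - x) ^ 2 ≤ ((1 + |x₀|) * (1 + |y|)) ^ 2 :=
          pow_le_pow_left₀ (by linarith) h3 2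
        have h5 : ‖(1 + |y|) ^ 2‖ = (1 + |y|) ^ 2 := Real.norm_of_nonneg (by positivity)
        rw [h5]
        calc ‖Dker k (y - x) - Dker 0 (y - x)‖ * (‖V y‖ * ‖m y 0‖)
            ≤ (4 * |k| * ((1 + |x₀|) * (1 + |y|)) ^ 2) * (‖V y‖ * C) := by
              refine mul_le_mul (h2.trans (mul_le_mul_of_nonneg_left h4 (by positivity)))
                (mul_le_mul_of_nonneg_left (hC y) (norm_nonneg _)) (by positivity) (by positivity)
          _ = _ := by ring
      refine h1.trans ?_
      rw [integral_const_mul]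
      have h2 : ∫ y in Ioi x, ‖(1 + |y|) ^ 2 * V y‖ ≤ I :=
        setIntegral_le_integral hV.norm (Eventually.of_forall fun _ => norm_nonneg _)
      calc _ ≤ 4 * |k| * ((1 + |x₀|) ^ 2 * C) * I :=
            mul_le_mul_of_nonneg_left h2 (by positivity)
        _ = 4 * |k| * B := by rw [hB]; ring
        _ ≤ 4 * |k| * B * pw x := le_mul_of_one_le_right (by positivity) (pw_ge_one x)
    · intro x
      rw [heqk x, heq0 x]
      have e1 : ∀ y, (Dker k (y - x) - Dker 0 (y - x)) * ((V y : ℂ) * m y 0) =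
        Dker k (y - x) * ((V y : ℂ) * m y 0) - Dker 0 (y - x) * ((V y : ℂ) * m y 0) := by
        intro y; ring
      have e2 : ∀ y, Dker k (y - x) * (V y : ℂ) * (m y k - m y 0) =
        Dker k (y - x) * ((V y : ℂ) * m y k) - Dker k (y - x) * ((V y : ℂ) * m y 0) := by
        intro y; ring
      simp only [e1, e2]
      rw [integral_sub (hD k x).integrableOn (hD 0 x).integrableOn,
        integral_sub (hD' k x).integrableOn (hD k x).integrableOn]
      simp only [mul_assoc]
      ring
  rw [tendsto_iff_norm_sub_tendsto_zero]
  refine squeeze_zero (fun _ => norm_nonneg _) hmain ?_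
  have : Tendsto (fun k : ℝ => CV V * (4 * |k| * B) * pw x₀) (𝓝 0)
      (𝓝 (CV V * (4 * |(0:ℝ)| * B) * pw x₀)) := by
    apply Continuous.tendsto; fun_prop
  simp only [abs_zero, mul_zero, zero_mul] at this
  exact this.mono_left nhdsWithin_le_nhds

lemma jost_real {V : ℝ → ℝ} (hVm : Measurable V)
    (hV : Integrable (fun y : ℝ => (1 + |y|) ^ 2 * V y)) {m : ℝ → ℝ → ℂ} (hmp : IsJostPlus V m)
    (x : ℝ) : m x 0 = ((m x 0).re : ℂ) := by
  obtain ⟨⟨C, hC⟩, heq0⟩ := hmp 0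
  have hma : AEStronglyMeasurable (fun y => (V y : ℂ) * (starRingEnd ℂ (m y 0) - m y 0)) := by
    have h1 := jost_meas hVm hV hmp 0
    have h2 := Complex.continuous_conj.comp_aestronglyMeasurable h1
    refine (h2.sub h1).congr (Eventually.of_forall fun y => ?_)
    simp only [Pi.sub_apply, map_mul, Complex.conj_ofReal]; ring
  have hD : ∀ x, Integrable (fun y => Dker 0 (y - x) * ((V y : ℂ) * m y 0)) := fun x =>
    jost_int hVm hV hmp 0 (Dker_shift_cont 0 x) (B := 1 + |x|) fun y => by
      refine (Dker_shift_bound 0 x y).trans ?_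
      have : 1 + |y| ≤ (1 + |y|) ^ 2 := by nlinarith [abs_nonneg y]
      exact mul_le_mul_of_nonneg_left this (by positivity)
  have hDc : ∀ x, Integrable (fun y => starRingEnd ℂ (Dker 0 (y - x) * ((V y : ℂ) * m y 0))) :=
    fun x => (Complex.conjCLE : ℂ →L[ℝ] ℂ).integrable_comp (hD x)
  have h0 := homog_zero hVm hV hma (C := C + C)
    (fun x => (norm_sub_le _ _).trans (add_le_add (by simpa using hC x) (hC x))) ?_ x
  · have : starRingEnd ℂ (m x 0) = m x 0 := sub_eq_zero.mp h0
    exact (Complex.conj_eq_iff_re.mp this).symm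
  · intro x
    have e2 : ∀ y, Dker 0 (y - x) * (V y : ℂ) * (starRingEnd ℂ (m y 0) - m y 0) =
        starRingEnd ℂ (Dker 0 (y - x) * ((V y : ℂ) * m y 0)) -
          Dker 0 (y - x) * ((V y : ℂ) * m y 0) := by
      intro y
      simp only [Dker_zero, map_mul, Complex.conj_ofReal]; ring
    simp only [e2]
    rw [integral_sub (hDc x).integrableOn (hD x).integrableOn, integral_conj]
    conv_lhs => rw [heq0 x]
    simp only [mul_assoc, map_add, map_one]
    ring

lemma fub {f g : ℝ → ℂ} (hf : AEStronglyMeasurable f) (hg : AEStronglyMeasurable g)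
    (hf1 : Integrable (fun y : ℝ => (1 + |y|) * ‖f y‖))
    (hg1 : Integrable (fun y : ℝ => (1 + |y|) * ‖g y‖)) {K : ℝ → ℂ} (hK : Continuous K)
    (hKb : ∀ w, ‖K w‖ ≤ |w|) :
    Integrable (fun p : ℝ × ℝ => {p : ℝ × ℝ | p.2 < p.1}.indicator
      (fun p => K (p.1 - p.2) * (f p.1 * g p.2)) p) (volume.prod volume) ∧
    ∫ p : ℝ × ℝ, {p : ℝ × ℝ | p.2 < p.1}.indicator
      (fun p => K (p.1 - p.2) * (f p.1 * g p.2)) p ∂(volume.prod volume) =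
      ∫ y, f y * ∫ z in Iio y, K (y - z) * g z ∧
    ∫ p : ℝ × ℝ, {p : ℝ × ℝ | p.2 < p.1}.indicator
      (fun p => K (p.1 - p.2) * (f p.1 * g p.2)) p ∂(volume.prod volume) =
      ∫ z, g z * ∫ y in Ioi z, K (y - z) * f y := by
  have hS : MeasurableSet {p : ℝ × ℝ | p.2 < p.1} := measurableSet_lt measurable_snd measurable_fst
  have hint : Integrable (fun p : ℝ × ℝ => {p : ℝ × ℝ | p.2 < p.1}.indicator
      (fun p => K (p.1 - p.2) * (f p.1 * g p.2)) p) (volume.prod volume) := by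
    refine Integrable.indicator ?_ hS
    refine Integrable.mono' (hf1.mul_prod hg1) ?_ ?_
    · have hc : Continuous fun p : ℝ × ℝ => K (p.1 - p.2) := by fun_prop
      exact hc.aestronglyMeasurable.mul (hf.comp_fst.mul hg.comp_snd)
    · refine Eventually.of_forall fun p => ?_
      rw [norm_mul, norm_mul]
      have h1 : ‖K (p.1 - p.2)‖ ≤ (1 + |p.1|) * (1 + |p.2|) := by
        refine (hKb _).trans ((abs_sub p.1 p.2).trans ?_)
        nlinarith [abs_nonneg p.1, abs_nonneg p.2]
      have := mul_le_mul_of_nonneg_right h1 (by positivity : 0 ≤ ‖f p.1‖ * ‖g p.2‖)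
      linarith
  refine ⟨hint, ?_, ?_⟩
  · rw [integral_prod _ hint]
    congr 1; ext y
    rw [← integral_const_mul, ← integral_indicator measurableSet_Iio]
    congr 1; ext z
    by_cases h : z < y
    · rw [indicator_of_mem (show (y, z) ∈ {p : ℝ × ℝ | p.2 < p.1} from h), indicator_of_mem (show z ∈ Iio y from h)]
      ring
    · rw [indicator_of_notMem (show (y, z) ∉ {p : ℝ × ℝ | p.2 < p.1} from h), indicator_of_notMem (show z ∉ Iio y from h)]
  · rw [integral_prod_symm _ hint]
    congr 1; ext z
    rw [← integral_const_mul, ← integral_indicator measurableSet_Ioi]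
    congr 1; ext y
    by_cases h : z < y
    · rw [indicator_of_mem (show (y, z) ∈ {p : ℝ × ℝ | p.2 < p.1} from h), indicator_of_mem (show y ∈ Ioi z from h)]
      ring
    · rw [indicator_of_notMem (show (y, z) ∉ {p : ℝ × ℝ | p.2 < p.1} from h), indicator_of_notMem (show y ∉ Ioi z from h)]

lemma Jcalc {g : ℝ → ℂ} (g0 : Integrable g) (g1 : Integrable (fun y : ℝ => (y : ℂ) * g y))
    (g2 : Integrable (fun y : ℝ => (y : ℂ) ^ 2 * g y)) (h0 : ∫ y, g y = 0) :
    ∫ p : ℝ × ℝ, {p : ℝ × ℝ | p.2 < p.1}.indicator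
      (fun p => ((p.1 - p.2 : ℝ) : ℂ) ^ 2 / 2 * (g p.1 * g p.2)) p ∂(volume.prod volume) =
      -(∫ y : ℝ, (y : ℂ) * g y) ^ 2 / 2 := by
  have hS : MeasurableSet {p : ℝ × ℝ | p.2 < p.1} := measurableSet_lt measurable_snd measurable_fst
  set Q : ℝ × ℝ → ℂ := fun p => ((p.1 - p.2 : ℝ) : ℂ) ^ 2 / 2 * (g p.1 * g p.2) with hQ
  have e : Q = fun p : ℝ × ℝ => ((1 / 2 : ℂ) * (((p.1 : ℂ) ^ 2 * g p.1) * g p.2) -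
      ((p.1 : ℂ) * g p.1) * ((p.2 : ℂ) * g p.2)) + (1 / 2 : ℂ) * (g p.1 * ((p.2 : ℂ) ^ 2 * g p.2)) := by
    ext p
    simp only [hQ]; push_cast; ring
  have i1 := (g2.mul_prod g0).const_mul (1 / 2 : ℂ)
  have i2 := g1.mul_prod g1
  have i3 := (g0.mul_prod g2).const_mul (1 / 2 : ℂ)
  have hQi : Integrable Q (volume.prod volume) := by
    rw [e]; exact (i1.sub i2).add i3
  have hQv : ∫ p, Q p ∂(volume.prod volume) = -(∫ y : ℝ, (y : ℂ) * g y) ^ 2 := by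
    have i12 : Integrable (fun p : ℝ × ℝ => (1 / 2 : ℂ) * (((p.1 : ℂ) ^ 2 * g p.1) * g p.2) -
      ((p.1 : ℂ) * g p.1) * ((p.2 : ℂ) * g p.2)) (volume.prod volume) := i1.sub i2
    rw [e, integral_add i12 i3, integral_sub i1 i2, integral_const_mul, integral_const_mul,
      integral_prod_mul (fun y : ℝ => (y : ℂ) ^ 2 * g y) g,
      integral_prod_mul (fun y : ℝ => (y : ℂ) * g y) (fun y : ℝ => (y : ℂ) * g y),
      integral_prod_mul g (fun y : ℝ => (y : ℂ) ^ 2 * g y), h0]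
    ring
  have hSi : Integrable (fun p => {p : ℝ × ℝ | p.2 < p.1}.indicator Q p) (volume.prod volume) :=
    hQi.indicator hS
  have hsw : Integrable (fun p : ℝ × ℝ => {p : ℝ × ℝ | p.2 < p.1}.indicator Q p.swap)
      (volume.prod volume) := hSi.swap
  have hdec : Q = fun p => {p : ℝ × ℝ | p.2 < p.1}.indicator Q p +
      {p : ℝ × ℝ | p.2 < p.1}.indicator Q p.swap := by
    ext ⟨y, z⟩
    rcases lt_trichotomy z y with h | h | h
    · rw [indicator_of_mem (show (y, z) ∈ {p : ℝ × ℝ | p.2 < p.1} from h),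
        indicator_of_notMem (show (y, z).swap ∉ {p : ℝ × ℝ | p.2 < p.1} from not_lt.mpr h.le), add_zero]
    · subst h
      rw [indicator_of_notMem (show (z, z) ∉ {p : ℝ × ℝ | p.2 < p.1} from lt_irrefl z),
        indicator_of_notMem (show (z, z).swap ∉ {p : ℝ × ℝ | p.2 < p.1} from lt_irrefl z)]
      simp [hQ]
    · rw [indicator_of_notMem (show (y, z) ∉ {p : ℝ × ℝ | p.2 < p.1} from not_lt.mpr h.le),
        indicator_of_mem (show (y, z).swap ∈ {p : ℝ × ℝ | p.2 < p.1} from h)]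
      simp only [hQ, Prod.swap, zero_add]; push_cast; ring
  have h2 : ∫ p, Q p ∂(volume.prod volume) =
      ∫ p, {p : ℝ × ℝ | p.2 < p.1}.indicator Q p ∂(volume.prod volume) +
      ∫ p, {p : ℝ × ℝ | p.2 < p.1}.indicator Q p ∂(volume.prod volume) := by
    conv_lhs => rw [hdec]
    rw [integral_add hSi hsw]
    congr 1
    exact integral_prod_swap (fun p => {p : ℝ × ℝ | p.2 < p.1}.indicator Q p)
  rw [hQv] at h2
  linear_combination (-1 / 2 : ℂ) * h2

lemma refl_int {V : ℝ → ℝ} (hV : Integrable (fun y : ℝ => (1 + |y|) ^ 2 * V y)) :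
    Integrable (fun y : ℝ => (1 + |y|) ^ 2 * V (-y)) := by
  have := hV.comp_neg
  simpa using this

lemma le_sq (y : ℝ) : 1 + |y| ≤ (1 + |y|) ^ 2 := by nlinarith [abs_nonneg y]

lemma main_plus {V : ℝ → ℝ} (hVm : Measurable V)
    (hV : Integrable (fun y : ℝ => (1 + |y|) ^ 2 * V y)) {m : ℝ → ℝ → ℂ} (hmp : IsJostPlus V m)
    (hng : (∫ y : ℝ, (V y : ℂ) * m y 0) = 0) :
    ∃ a : ℝ, a ≠ 0 ∧ ((a : ℂ) = 1 + ∫ y : ℝ, (y : ℂ) * ((V y : ℂ) * m y 0)) ∧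
      (∀ x, m x 0 = a + ∫ y in Iic x, Dker 0 (x - y) * (V y : ℂ) * m y 0) ∧
      Tendsto (fun x : ℝ => m x 0) atBot (𝓝 (a : ℂ)) ∧
      Tendsto (fun k : ℝ => (2 * Complex.I * (k : ℂ))⁻¹ * ∫ y : ℝ, (V y : ℂ) * m y k)
        (𝓝[≠] (0:ℝ)) (𝓝 (-((a : ℂ) - 1) ^ 2 / (2 * a))) ∧
      Tendsto (fun k : ℝ => (2 * Complex.I * (k : ℂ))⁻¹ * ∫ y : ℝ,
        Complex.exp (2 * Complex.I * (k : ℂ) * (y : ℂ)) * (V y : ℂ) * m y k)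
        (𝓝[≠] (0:ℝ)) (𝓝 (((a : ℂ) ^ 2 - 1) / (2 * a))) := by
  obtain ⟨⟨C, hC⟩, heq0⟩ := hmp 0
  have hC0 : 0 ≤ C := (norm_nonneg _).trans (hC 0)
  have hma := jost_meas hVm hV hmp
  have hub := jost_ub hVm hV hmp
  set g : ℝ → ℂ := fun y => (V y : ℂ) * m y 0 with hg
  have g0' : ∀ k, Integrable (fun y => (V y : ℂ) * m y k) := fun k => by
    have := jost_int hVm hV hmp k (c := fun _ => 1) continuous_const (B := 1) fun y => by
      have := le_sq y
      have := abs_nonneg y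
      simp only [norm_one]; linarith
    simpa using this
  have g0 : Integrable g := g0' 0
  have g1 : Integrable (fun y : ℝ => (y : ℂ) * g y) :=
    jost_int hVm hV hmp 0 (c := fun y : ℝ => (y : ℂ)) Complex.continuous_ofReal (B := 1) fun y => by
      have := le_sq y
      rw [Complex.norm_real, Real.norm_eq_abs]; linarith
  have g2 : Integrable (fun y : ℝ => (y : ℂ) ^ 2 * g y) :=
    jost_int hVm hV hmp 0 (c := fun y : ℝ => (y : ℂ) ^ 2) (by fun_prop) (B := 1) fun y => by
      rw [norm_pow, Complex.norm_real, Real.norm_eq_abs]; nlinarith [abs_nonneg y]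
  -- the real number `a`
  obtain ⟨a, ha⟩ : ∃ a : ℝ, (a : ℂ) = 1 + ∫ y : ℝ, (y : ℂ) * g y := by
    refine ⟨1 + ∫ y : ℝ, y * (V y * (m y 0).re), ?_⟩
    push_cast
    rw [← integral_complex_ofReal]
    congr 2
    ext y
    simp only [hg]
    rw [jost_real hVm hV hmp y]
    push_cast; simp
  have hDx : ∀ x, Integrable (fun y => Dker 0 (y - x) * g y) := fun x =>
    jost_int hVm hV hmp 0 (Dker_shift_cont 0 x) (B := 1 + |x|) fun y =>
      (Dker_shift_bound 0 x y).trans (mul_le_mul_of_nonneg_left (le_sq y) (by positivity))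
  have hleft : ∀ x, m x 0 = a + ∫ y in Iic x, Dker 0 (x - y) * g y := by
    intro x
    have h1 := intervalIntegral.integral_Iic_add_Ioi (b := x) (hDx x).integrableOn (hDx x).integrableOn
    have h2 : ∫ y, Dker 0 (y - x) * g y = a - 1 := by
      have : (fun y => Dker 0 (y - x) * g y) = fun y : ℝ => (y : ℂ) * g y - (x : ℂ) * g y := by
        ext y; rw [Dker_zero]; push_cast; ring
      rw [this, integral_sub g1 (g0.const_mul _), integral_const_mul, hng, ha]
      ring
    have h3 : ∫ y in Iic x, Dker 0 (x - y) * g y = - ∫ y in Iic x, Dker 0 (y - x) * g y := by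
      rw [← integral_neg]
      congr 1; ext y
      rw [Dker_zero, Dker_zero]; push_cast; ring
    have h4 := heq0 x
    simp only [mul_assoc] at h4
    rw [h3, h4]
    simp only [hg] at h1 h2 ⊢
    linear_combination h1 + h2
  have hane : a ≠ 0 := by
    intro ha0
    have hz : ∀ x, m (-x) 0 = 0 := by
      refine homog_zero (V := fun y => V (-y)) (hVm.comp measurable_neg) (refl_int hV)
        (h := fun x => m (-x) 0) ?_ (fun x => hC (-x)) ?_
      · exact (hma 0).comp_quasiMeasurePreserving
          (Measure.measurePreserving_neg volume).quasiMeasurePreserving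
      · intro x
        have h1 := hleft (-x)
        rw [ha0, ← integral_comp_neg_Ioi] at h1
        rw [h1]
        simp only [Complex.ofReal_zero, zero_add, hg]
        congr 1; ext y
        rw [show -x - -y = y - x by ring]; ring
    have hgz : ∀ y : ℝ, (y : ℂ) * g y = 0 := by
      intro y
      have := hz (-y)
      rw [neg_neg] at this
      simp [hg, this]
    simp [hgz, ha0] at ha
  have haC : (a : ℂ) ≠ 0 := by exact_mod_cast hane
  have hlim : Tendsto (fun x : ℝ => m x 0) atBot (𝓝 (a : ℂ)) := by
    have h1 : Tendsto (fun x : ℝ => ∫ y, (Iic x).indicator (fun y => Dker 0 (x - y) * g y) y) atBot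
        (𝓝 (∫ _y : ℝ, (0:ℂ))) := by
      refine tendsto_integral_filter_of_dominated_convergence (fun y : ℝ => ‖(y : ℂ) * g y‖) ?_ ?_
        g1.norm ?_
      · refine Eventually.of_forall fun x => ?_
        refine AEStronglyMeasurable.indicator ?_ measurableSet_Iic
        exact ((Dker_continuous 0).comp (continuous_const.sub continuous_id)).aestronglyMeasurable.mul
          (hma 0)
      · filter_upwards [eventually_le_atBot (0:ℝ)] with x hx
        refine Eventually.of_forall fun y => ?_
        by_cases h : y ≤ x
        · rw [indicator_of_mem (show y ∈ Iic x from h), norm_mul, norm_mul (y : ℂ)]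
          refine mul_le_mul_of_nonneg_right ?_ (norm_nonneg _)
          refine (Dker_norm_le _ _).trans ?_
          rw [Complex.norm_real, Real.norm_eq_abs, abs_of_nonneg (by linarith), abs_of_nonpos (by linarith)]
          linarith
        · rw [indicator_of_notMem (show y ∉ Iic x from h), norm_zero]
          exact norm_nonneg _
      · refine Eventually.of_forall fun y => ?_
        refine tendsto_const_nhds.congr' ?_
        filter_upwards [eventually_lt_atBot y] with x hx
        rw [indicator_of_notMem (show y ∉ Iic x from not_le.mpr hx)]
    rw [integral_zero] at h1
    have h2 := (tendsto_const_nhds (x := (a : ℂ))).add h1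
    rw [add_zero] at h2
    refine h2.congr fun x => ?_
    rw [integral_indicator measurableSet_Iic, ← hleft x]
  -- the double-integral identity
  have hw1 : ∀ k, Integrable (fun y : ℝ => (1 + |y|) * ‖(V y : ℂ) * m y k‖) := fun k => by
    have := (jost_int hVm hV hmp k (c := fun y : ℝ => ((1 + |y| : ℝ) : ℂ)) (by fun_prop) (B := 1)
      fun y => by
        rw [Complex.norm_real, Real.norm_of_nonneg (by positivity)]; linarith [le_sq y]).norm
    refine this.congr (Eventually.of_forall fun y => ?_)
    simp only
    rw [norm_mul, Complex.norm_real, Real.norm_of_nonneg (by positivity)]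
  have hid : ∀ k : ℝ, k ≠ 0 → ∫ p : ℝ × ℝ, {p : ℝ × ℝ | p.2 < p.1}.indicator
      (fun p => Eker k (p.1 - p.2) * (((V p.1 : ℂ) * m p.1 k) * g p.2)) p ∂(volume.prod volume) =
      a * ((2 * Complex.I * (k : ℂ))⁻¹ * ∫ y : ℝ, (V y : ℂ) * m y k) := by
    intro k hk
    obtain ⟨iD, -, eD⟩ := fub (hma k) (hma 0) (hw1 k) (hw1 0) (Dker_continuous k) (Dker_norm_le k)
    obtain ⟨i0, e0, -⟩ := fub (hma k) (hma 0) (hw1 k) (hw1 0) (Dker_continuous 0) (Dker_norm_le 0)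
    have hsplit : ∀ p : ℝ × ℝ, {p : ℝ × ℝ | p.2 < p.1}.indicator
        (fun p => Eker k (p.1 - p.2) * (((V p.1 : ℂ) * m p.1 k) * g p.2)) p =
        (2 * Complex.I * (k : ℂ))⁻¹ * ({p : ℝ × ℝ | p.2 < p.1}.indicator
        (fun p => Dker k (p.1 - p.2) * (((V p.1 : ℂ) * m p.1 k) * ((V p.2 : ℂ) * m p.2 0))) p -
        {p : ℝ × ℝ | p.2 < p.1}.indicator
        (fun p => Dker 0 (p.1 - p.2) * (((V p.1 : ℂ) * m p.1 k) * ((V p.2 : ℂ) * m p.2 0))) p) := by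
      intro p
      by_cases h : p ∈ {p : ℝ × ℝ | p.2 < p.1}
      · rw [indicator_of_mem h, indicator_of_mem h, indicator_of_mem h, Eker, Dker_zero, hg]
        ring
      · rw [indicator_of_notMem h, indicator_of_notMem h, indicator_of_notMem h]; ring
    simp_rw [hsplit]
    rw [integral_const_mul, integral_sub iD i0, eD, e0]
    have hL : ∀ y, ∫ z in Iio y, Dker 0 (y - z) * ((V z : ℂ) * m z 0) = m y 0 - a := by
      intro y
      rw [hleft y, setIntegral_congr_set Iio_ae_eq_Iic]
      ring
    have hR : ∀ z, ∫ y in Ioi z, Dker k (y - z) * ((V y : ℂ) * m y k) = m z k - 1 := by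
      intro z
      rw [(hmp k).2 z]
      simp only [mul_assoc]
      ring
    simp_rw [hL, hR]
    have j1 : Integrable (fun y => (V y : ℂ) * m y 0 * m y k) := by
      obtain ⟨C', hC'⟩ := (hmp k).1
      refine Integrable.mono' ((g0' k).norm.const_mul C) ?_ (Eventually.of_forall fun y => ?_)
      · have hVi : Measurable fun y => ((V y : ℂ))⁻¹ := (Complex.measurable_ofReal.comp hVm).inv
        refine (((hma 0).mul (hma k)).mul hVi.aestronglyMeasurable).congr
          (Eventually.of_forall fun y => ?_)
        simp only [Pi.mul_apply]
        by_cases hv : (V y : ℂ) = 0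
        · simp [hv]
        · field_simp
      · rw [norm_mul, norm_mul, norm_mul]
        have := mul_le_mul_of_nonneg_left (hC y) (by positivity : 0 ≤ ‖(V y : ℂ)‖ * ‖m y k‖)
        linarith
    have s1 : ∫ z, (V z : ℂ) * m z 0 * (m z k - 1) = ∫ y, (V y : ℂ) * m y 0 * m y k := by
      simp_rw [mul_sub, mul_one]
      rw [integral_sub j1 g0, hng, sub_zero]
    have s2 : ∫ y, (V y : ℂ) * m y k * (m y 0 - a) =
        (∫ y, (V y : ℂ) * m y 0 * m y k) - a * ∫ y, (V y : ℂ) * m y k := by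
      rw [← integral_const_mul, ← integral_sub j1 ((g0' k).const_mul _)]
      congr 1; ext y; ring
    rw [s1, s2]
    ring
  -- the limit
  have hlim1 : Tendsto (fun k : ℝ => ∫ p : ℝ × ℝ, {p : ℝ × ℝ | p.2 < p.1}.indicator
      (fun p => Eker k (p.1 - p.2) * (((V p.1 : ℂ) * m p.1 k) * g p.2)) p ∂(volume.prod volume))
      (𝓝[≠] (0:ℝ)) (𝓝 (∫ p : ℝ × ℝ, {p : ℝ × ℝ | p.2 < p.1}.indicator
      (fun p => ((p.1 - p.2 : ℝ) : ℂ) ^ 2 / 2 * (g p.1 * g p.2)) p ∂(volume.prod volume))) := by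
    have hS : MeasurableSet {p : ℝ × ℝ | p.2 < p.1} :=
      measurableSet_lt measurable_snd measurable_fst
    have hb := (hV.norm.mul_prod hV.norm).const_mul (2 * CV V * C)
    refine tendsto_integral_filter_of_dominated_convergence _ ?_ ?_ hb ?_
    · refine Eventually.of_forall fun k => ?_
      refine AEStronglyMeasurable.indicator ?_ hS
      have hc : Continuous fun p : ℝ × ℝ => Eker k (p.1 - p.2) :=
        (Eker_continuous k).comp (continuous_fst.sub continuous_snd)
      exact hc.aestronglyMeasurable.mul ((hma k).comp_fst.mul (hma 0).comp_snd)
    · refine Eventually.of_forall fun k => Eventually.of_forall fun p => ?_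
      have hCV := CV_nonneg V
      by_cases h : p ∈ {p : ℝ × ℝ | p.2 < p.1}
      · rw [indicator_of_mem h]
        have h : p.2 < p.1 := h
        simp only [hg, norm_mul, Complex.norm_real, norm_pow]
        have n1 : ∀ y : ℝ, ‖1 + |y|‖ = 1 + |y| := fun y => Real.norm_of_nonneg (by positivity)
        rw [n1, n1]
        have b1 := Eker_norm_le k (p.1 - p.2)
        have b2 := hub k p.1
        have b3 := hC p.2
        have q1 := pw_ineq h.le
        have q2 := pw_le p.2
        have q3 : (p.1 - p.2) * pw p.1 ≤ (1 + |p.2|) * (1 + |p.1|) :=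
          q1.trans (mul_le_mul_of_nonneg_right q2 (by positivity))
        have q4 : p.1 - p.2 ≤ (1 + |p.2|) * (1 + |p.1|) := by
          have := neg_abs_le p.2
          have := le_abs_self p.1
          nlinarith [abs_nonneg p.1, abs_nonneg p.2]
        have q5 : (p.1 - p.2) * ((p.1 - p.2) * pw p.1) ≤
            ((1 + |p.2|) * (1 + |p.1|)) * ((1 + |p.2|) * (1 + |p.1|)) :=
          mul_le_mul q4 q3 (mul_nonneg (by linarith) (pw_pos _).le) (by positivity)
        have r1 : ‖Eker k (p.1 - p.2)‖ * ‖m p.1 k‖ * ‖m p.2 0‖ ≤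
            (2 * (p.1 - p.2) ^ 2) * (CV V * pw p.1) * C := by
          refine mul_le_mul (mul_le_mul b1 b2 (norm_nonneg _) (by positivity)) b3 (norm_nonneg _) ?_
          have := (pw_pos p.1).le
          positivity
        have r2 : (2 * (p.1 - p.2) ^ 2) * (CV V * pw p.1) * C ≤
            2 * CV V * C * ((1 + |p.1|) ^ 2 * (1 + |p.2|) ^ 2) := by
          have := mul_le_mul_of_nonneg_left q5 (by positivity : 0 ≤ 2 * CV V * C)
          linarith
        have r3 := mul_le_mul_of_nonneg_right (r1.trans r2)
          (by positivity : 0 ≤ ‖V p.1‖ * ‖V p.2‖)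
        linarith
      · rw [indicator_of_notMem h, norm_zero]
        positivity
    · refine Eventually.of_forall fun p => ?_
      by_cases h : p ∈ {p : ℝ × ℝ | p.2 < p.1}
      · simp only [indicator_of_mem h]
        exact (Eker_tendsto _).mul
          (((jost_conv hVm hV hmp p.1).const_mul _).mul_const _)
      · simp only [indicator_of_notMem h]
        exact tendsto_const_nhds
  rw [Jcalc g0 g1 g2 hng] at hlim1
  have hJ : ∫ y : ℝ, (y : ℂ) * g y = a - 1 := by rw [ha]; ring
  rw [hJ] at hlim1
  have hT : Tendsto (fun k : ℝ => (2 * Complex.I * (k : ℂ))⁻¹ * ∫ y : ℝ, (V y : ℂ) * m y k)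
        (𝓝[≠] (0:ℝ)) (𝓝 (-((a : ℂ) - 1) ^ 2 / (2 * a))) := by
    have h1 := hlim1.const_mul ((a : ℂ)⁻¹)
    have e1 : (a : ℂ)⁻¹ * (-((a : ℂ) - 1) ^ 2 / 2) = -((a : ℂ) - 1) ^ 2 / (2 * a) := by
      field_simp
    rw [e1] at h1
    refine h1.congr' ?_
    filter_upwards [self_mem_nhdsWithin] with k hk
    rw [hid k hk, inv_mul_cancel_left₀ haC]
  refine ⟨a, hane, ha, ?_, hlim, hT, ?_⟩
  · intro x
    rw [hleft x]
    simp only [hg, mul_assoc]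
  · have hlim2 : Tendsto (fun k : ℝ => ∫ y : ℝ, Dker k y * ((V y : ℂ) * m y k)) (𝓝[≠] (0:ℝ))
        (𝓝 (∫ y : ℝ, (y : ℂ) * g y)) := by
      refine tendsto_integral_filter_of_dominated_convergence _ ?_ ?_ (hV.norm.const_mul (CV V)) ?_
      · exact Eventually.of_forall fun k => (Dker_continuous k).aestronglyMeasurable.mul (hma k)
      · refine Eventually.of_forall fun k => Eventually.of_forall fun y => ?_
        have n1 : ‖1 + |y|‖ = 1 + |y| := Real.norm_of_nonneg (by positivity)
        rw [norm_mul, norm_mul, Complex.norm_real, norm_mul, norm_pow, n1]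
        have hCV := CV_nonneg V
        have b1 : ‖Dker k y‖ ≤ 1 + |y| := (Dker_norm_le k y).trans (by linarith)
        have b2 : ‖m y k‖ ≤ CV V * (1 + |y|) :=
          (hub k y).trans (mul_le_mul_of_nonneg_left (pw_le y) hCV)
        have b3 := mul_le_mul b1 b2 (norm_nonneg _) (by positivity)
        have := mul_le_mul_of_nonneg_right b3 (norm_nonneg (V y))
        linarith
      · exact Eventually.of_forall fun y =>
          (Dker_tendsto y).mul ((jost_conv hVm hV hmp y).const_mul _)
    rw [hJ] at hlim2
    have h3 := hT.add hlim2
    have e1 : -((a : ℂ) - 1) ^ 2 / (2 * a) + (a - 1) = ((a : ℂ) ^ 2 - 1) / (2 * a) := by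
      field_simp; ring
    rw [e1] at h3
    refine h3.congr' ?_
    filter_upwards [self_mem_nhdsWithin] with k hk
    have hk : k ≠ 0 := hk
    have iD : Integrable (fun y => Dker k y * ((V y : ℂ) * m y k)) :=
      jost_int hVm hV hmp k (Dker_continuous k) (B := 1) fun y => by
        have := Dker_norm_le k y
        linarith [le_sq y]
    have e2 : ∀ y : ℝ, Complex.exp (2 * Complex.I * (k : ℂ) * (y : ℂ)) * (V y : ℂ) * m y k =
        (V y : ℂ) * m y k + (2 * Complex.I * (k : ℂ)) * (Dker k y * ((V y : ℂ) * m y k)) := by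
      intro y
      have h1 : (2 * Complex.I * (k : ℂ)) * Dker k y =
          Complex.exp (2 * Complex.I * (k : ℂ) * (y : ℂ)) - 1 := by
        rw [Dker_ne hk, mul_div_cancel₀ _ (ne_2ik hk)]
      rw [← mul_assoc (2 * Complex.I * (k : ℂ)), h1]
      ring
    simp_rw [e2]
    rw [integral_add (g0' k) (iD.const_mul _), integral_const_mul, mul_add,
      inv_mul_cancel_left₀ (ne_2ik hk)]

lemma jap_int {V : ℝ → ℝ} (hVm : Measurable V)
    (hVint : Integrable (fun y : ℝ => jap y ^ 2 * |V y|)) :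
    Integrable (fun y : ℝ => (1 + |y|) ^ 2 * V y) := by
  refine Integrable.mono' (hVint.const_mul 2) ?_ (Eventually.of_forall fun y => ?_)
  · exact ((by fun_prop : Measurable fun y : ℝ => (1 + |y|) ^ 2).mul hVm).aestronglyMeasurable
  · have h1 : jap y ^ 2 = 1 + y ^ 2 := Real.sq_sqrt (by positivity)
    rw [h1, norm_mul, Real.norm_eq_abs (V y), Real.norm_of_nonneg (by positivity), ← mul_assoc]
    refine mul_le_mul_of_nonneg_right ?_ (abs_nonneg _)
    nlinarith [sq_nonneg (1 - |y|), sq_abs y]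

lemma refl_jost {V : ℝ → ℝ} {mm : ℝ → ℝ → ℂ} (hmm : IsJostMinus V mm) :
    IsJostPlus (fun y => V (-y)) (fun x k => mm (-x) k) := by
  intro k
  obtain ⟨⟨C, hC⟩, heq⟩ := hmm k
  refine ⟨⟨C, fun x => hC (-x)⟩, fun x => ?_⟩
  beta_reduce
  rw [heq (-x), ← integral_comp_neg_Ioi]
  congr 2
  ext y
  rw [show -x - -y = y - x by ring]


/-- Low-energy scattering for a non-generic potential: `m₊(·,0)` has a nonzero real limit `a`
at `−∞`, and `T(k) → 2a/(1+a²)`, `R₊(k) → (1−a²)/(1+a²)`, `R₋(k) → (a²−1)/(1+a²)` as `k → 0`. -/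
theorem statement_16 (V : ℝ → ℝ) (hVmeas : Measurable V)
    (hVint : Integrable (fun y : ℝ => jap y ^ 2 * |V y|))
    (mp mm : ℝ → ℝ → ℂ) (hmp : IsJostPlus V mp) (hmm : IsJostMinus V mm)
    (hng : (∫ y : ℝ, (V y : ℂ) * mp y 0) = 0) :
    ∃ a : ℝ, a ≠ 0 ∧ Tendsto (fun x : ℝ => mp x 0) atBot (𝓝 ((a : ℝ) : ℂ)) ∧
      Tendsto (Tcoef V mp) (𝓝[≠] (0:ℝ)) (𝓝 (((2 * a / (1 + a ^ 2) : ℝ) : ℂ))) ∧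
      Tendsto (Rp V mp mm) (𝓝[≠] (0:ℝ)) (𝓝 ((((1 - a ^ 2) / (1 + a ^ 2) : ℝ) : ℂ))) ∧
      Tendsto (Rm V mp mm) (𝓝[≠] (0:ℝ)) (𝓝 ((((a ^ 2 - 1) / (1 + a ^ 2) : ℝ) : ℂ))) := by
  have hV := jap_int hVmeas hVint
  obtain ⟨a, hane, ha, hleft, hlim, hT, hR⟩ := main_plus hVmeas hV hmp hng
  have haC : (a : ℂ) ≠ 0 := by exact_mod_cast hane
  have hVm' : Measurable (fun y => V (-y)) := hVmeas.comp measurable_neg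
  have hV' := refl_int hV
  have hmp' := refl_jost hmm
  -- identification of `m₋(·,0)` with `m₊(·,0)/a`
  have hident : ∀ x, mm (-x) 0 - (a : ℂ)⁻¹ * mp (-x) 0 = 0 := by
    obtain ⟨⟨C, hC⟩, heq0⟩ := hmp 0
    obtain ⟨⟨C', hC'⟩, heq0'⟩ := hmp' 0
    have mA : AEStronglyMeasurable (fun y => (V (-y) : ℂ) * mp (-y) 0) :=
      (jost_meas hVmeas hV hmp 0).comp_quasiMeasurePreserving
          (Measure.measurePreserving_neg volume).quasiMeasurePreserving
    have mB := jost_meas hVm' hV' hmp' 0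
    have bnd : ∀ x y : ℝ, ‖Dker 0 (y - x)‖ ≤ (1 + |x|) * (1 + |y|) ^ 2 := fun x y =>
      (Dker_shift_bound 0 x y).trans (mul_le_mul_of_nonneg_left (le_sq y) (by positivity))
    have iA : ∀ x, Integrable (fun y => Dker 0 (y - x) * ((V (-y) : ℂ) * mp (-y) 0)) := fun x =>
      intW hV' (h := fun y => mp (-y) 0) mA (Dker_shift_cont 0 x) (B := (1 + |x|) * C) fun y => by
        have := mul_le_mul (bnd x y) (hC (-y)) (norm_nonneg _) (by positivity)
        linarith
    have iB : ∀ x, Integrable (fun y => Dker 0 (y - x) * ((V (-y) : ℂ) * mm (-y) 0)) := fun x =>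
      jost_int hVm' hV' hmp' 0 (Dker_shift_cont 0 x) (bnd x)
    refine homog_zero hVm' hV' (h := fun x => mm (-x) 0 - (a : ℂ)⁻¹ * mp (-x) 0) ?_
      (C := C' + ‖(a : ℂ)⁻¹‖ * C) ?_ ?_
    · refine (mB.sub (mA.const_mul (a : ℂ)⁻¹)).congr (Eventually.of_forall fun y => ?_)
      simp only [Pi.sub_apply]; ring
    · intro x
      refine (norm_sub_le _ _).trans (add_le_add (hC' x) ?_)
      rw [norm_mul]
      exact mul_le_mul_of_nonneg_left (hC (-x)) (norm_nonneg _)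
    · intro x
      have e1 : ∀ y, Dker 0 (y - x) * ((V (-y) : ℝ) : ℂ) * (mm (-y) 0 - (a : ℂ)⁻¹ * mp (-y) 0) =
          Dker 0 (y - x) * ((V (-y) : ℂ) * mm (-y) 0) -
            (a : ℂ)⁻¹ * (Dker 0 (y - x) * ((V (-y) : ℂ) * mp (-y) 0)) := by
        intro y; ring
      simp_rw [e1]
      rw [integral_sub (iB x).integrableOn ((iA x).integrableOn.const_mul _), integral_const_mul]
      have h1 := heq0' x
      have h2 := hleft (-x)
      rw [← integral_comp_neg_Ioi] at h2
      have e2 : ∀ y : ℝ, -x - -y = y - x := fun y => by ring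
      simp only [mul_assoc, e2] at h1 h2
      rw [h1, h2]
      field_simp
      ring
  have hmm0 : ∀ y, mm y 0 = (a : ℂ)⁻¹ * mp y 0 := by
    intro y
    have := hident (-y)
    rw [neg_neg] at this
    exact sub_eq_zero.mp this
  have hng' : (∫ y : ℝ, ((V (-y) : ℝ) : ℂ) * mm (-y) 0) = 0 := by
    rw [integral_neg_eq_self (fun y => ((V y : ℝ) : ℂ) * mm y 0)]
    have : ∀ y, (V y : ℂ) * mm y 0 = (a : ℂ)⁻¹ * ((V y : ℂ) * mp y 0) := by
      intro y; rw [hmm0]; ring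
    simp_rw [this]
    rw [integral_const_mul, hng, mul_zero]
  obtain ⟨b, hbne, hb, -, -, -, hR'⟩ := main_plus hVm' hV' hmp' hng'
  have hba : (b : ℂ) = (a : ℂ)⁻¹ := by
    rw [hb]
    have e1 : ∀ y : ℝ, (y : ℂ) * (((V (-y) : ℝ) : ℂ) * mm (-y) 0) =
        (fun y : ℝ => -(a : ℂ)⁻¹ * ((y : ℂ) * ((V y : ℂ) * mp y 0))) (-y) := by
      intro y
      simp only [hmm0]; push_cast; ring
    simp_rw [e1]
    rw [integral_neg_eq_self (fun y : ℝ => -(a : ℂ)⁻¹ * ((y : ℂ) * ((V y : ℂ) * mp y 0))),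
      integral_const_mul]
    have : ∫ y : ℝ, (y : ℂ) * ((V y : ℂ) * mp y 0) = a - 1 := by rw [ha]; ring
    rw [this]
    field_simp
    ring
  have h1a : (1 : ℂ) + (a : ℂ) ^ 2 ≠ 0 := by
    have : (1 : ℝ) + a ^ 2 ≠ 0 := by positivity
    exact_mod_cast this
  have hTc : Tendsto (Tcoef V mp) (𝓝[≠] (0:ℝ)) (𝓝 (2 * (a : ℂ) / (1 + (a : ℂ) ^ 2))) := by
    have h1 := (tendsto_const_nhds (x := (1 : ℂ))).sub hT
    have e1 : (1 : ℂ) - -((a : ℂ) - 1) ^ 2 / (2 * a) = (2 * (a : ℂ) / (1 + (a : ℂ) ^ 2))⁻¹ := by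
      field_simp; ring
    rw [e1] at h1
    have h2 := h1.inv₀ (inv_ne_zero (div_ne_zero (by simpa using hane) h1a))
    rw [inv_inv] at h2
    exact h2
  refine ⟨a, hane, hlim, ?_, ?_, ?_⟩
  · push_cast; exact hTc
  · have h1 := hTc.mul hR'
    have e1 : 2 * (a : ℂ) / (1 + (a : ℂ) ^ 2) * (((b : ℂ) ^ 2 - 1) / (2 * b)) =
        ((((1 - a ^ 2) / (1 + a ^ 2) : ℝ) : ℂ)) := by
      rw [hba]; push_cast; field_simp
    rw [e1] at h1
    refine h1.congr fun k => ?_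
    rw [Rp]
    congr 2
    rw [← integral_neg_eq_self]
    congr 1; ext y
    rw [neg_neg]
    congr 3
    push_cast
    ring
  · have h1 := hTc.mul hR
    have e1 : 2 * (a : ℂ) / (1 + (a : ℂ) ^ 2) * (((a : ℂ) ^ 2 - 1) / (2 * a)) =
        ((((a ^ 2 - 1) / (1 + a ^ 2) : ℝ) : ℂ)) := by
      push_cast; field_simp
    rw [e1] at h1
    exact h1
end

section
/- Let s ≥ 0 and assume ∫⟨y⟩^{s+1}|V(y)|dy < ∞, that V is non-generic (∫_ℝ V(y) m₊(y,0) dy = 0), and that the map x ↦ m₊(x,0) is odd. Then for every r ∈ {1,2,3,4} there exists C > 0 such that for α ∈ {0,1}: | ∂_x^α ( m₊(x,0)^r − 1 ) | ≤ C ⟨x⟩^{−s} W₊^{s+1}(x) for all x ≥ −1, and | ∂_x^α ( m₊(x,0)^r − (−1)^r ) | ≤ C ⟨x⟩^{−s} W₋^{s+1}(x) for all x ≤ 1. -/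
open MeasureTheory Filter Topology Set

/-- `W₊^s(x) = ∫_x^∞ ⟨y⟩^s |V(y)| dy`. -/
noncomputable def Wplus (V : ℝ → ℝ) (s x : ℝ) : ℝ :=
  ∫ y in Set.Ioi x, jap y ^ s * |V y|

/-- `W₋^s(x) = ∫_{−∞}^x ⟨y⟩^s |V(y)| dy`. -/
noncomputable def Wminus (V : ℝ → ℝ) (s x : ℝ) : ℝ :=
  ∫ y in Set.Iic x, jap y ^ s * |V y|


lemma jap_pos (x : ℝ) : 0 < jap x := by unfold jap; positivity

lemma one_le_jap (x : ℝ) : 1 ≤ jap x := by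
  unfold jap; rw [Real.one_le_sqrt]; nlinarith [sq_nonneg x]

lemma abs_le_jap (x : ℝ) : |x| ≤ jap x := by
  unfold jap; apply Real.abs_le_sqrt; linarith

lemma jap_neg (x : ℝ) : jap (-x) = jap x := by unfold jap; simp

lemma jap_cont : Continuous jap := by unfold jap; fun_prop

lemma jap_le (x y : ℝ) (hx : -1 ≤ x) (hxy : x ≤ y) : jap x ≤ 2 * jap y := by
  unfold jap
  rw [show (2:ℝ) = Real.sqrt (2^2) by rw [Real.sqrt_sq (by norm_num)],
    ← Real.sqrt_mul (by norm_num)]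
  apply Real.sqrt_le_sqrt
  rcases le_total 0 x with h | h <;> nlinarith [sq_nonneg y]

/-- Kernel bound. -/
lemma ker_bound (s : ℝ) (hs : 0 ≤ s) (x y : ℝ) (hx : -1 ≤ x) (hxy : x ≤ y) :
    (y - x) ≤ 2 * 2 ^ s * jap x ^ (-s) * jap y ^ (s + 1) ∧
    1 ≤ 2 * 2 ^ s * jap x ^ (-s) * jap y ^ (s + 1) := by
  have h1 : jap x ^ s ≤ 2 ^ s * jap y ^ s := by
    rw [← Real.mul_rpow (by norm_num) (jap_pos y).le]
    exact Real.rpow_le_rpow (jap_pos x).le (jap_le x y hx hxy) hs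
  have hp : 0 < jap x ^ s := Real.rpow_pos_of_pos (jap_pos x) s
  have h2 : 1 ≤ 2 ^ s * jap x ^ (-s) * jap y ^ s := by
    rw [Real.rpow_neg (jap_pos x).le]
    rw [show (2:ℝ) ^ s * (jap x ^ s)⁻¹ * jap y ^ s = (2 ^ s * jap y ^ s) / jap x ^ s by
      field_simp]
    rwa [one_le_div hp]
  have h3 : 2 * 2 ^ s * jap x ^ (-s) * jap y ^ (s + 1)
      = (2 ^ s * jap x ^ (-s) * jap y ^ s) * (2 * jap y) := by
    rw [Real.rpow_add (jap_pos y), Real.rpow_one]; ring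
  have hy := one_le_jap y
  have hy' := abs_le_jap y
  have hy2 := le_abs_self y
  rw [h3]
  constructor <;> nlinarith

lemma tail_plus (g : ℝ → ℝ) (hg : Integrable g) :
    Tendsto (fun x : ℝ => ∫ y in Ioi x, g y) atTop (𝓝 0) := by
  have h := tendsto_integral_filter_of_dominated_convergence (μ := volume) (l := atTop)
    (F := fun x : ℝ => (Ioi x).indicator g) (f := fun _ => (0:ℝ)) (fun y => ‖g y‖)
    (Eventually.of_forall fun x => hg.1.indicator measurableSet_Ioi)
    (Eventually.of_forall fun x => Eventually.of_forall fun y => norm_indicator_le_norm_self _ _)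
    hg.norm
    (Eventually.of_forall fun y => by
      apply tendsto_const_nhds.congr'
      filter_upwards [eventually_ge_atTop y] with x hx
      rw [indicator_of_notMem]; simpa using hx)
  simpa [integral_indicator measurableSet_Ioi] using h

lemma tail_minus (g : ℝ → ℝ) (hg : Integrable g) :
    Tendsto (fun x : ℝ => ∫ y in Iic (-x), g y) atTop (𝓝 0) := by
  have h := tail_plus (fun y => g (-y)) hg.comp_neg
  simpa only [integral_comp_neg_Ioi] using h

section core
variable (V : ℝ → ℝ) (m : ℝ → ℂ)

lemma dom (g : ℝ → ℝ) (hg : Integrable (fun y => jap y * |V y|)) (hgm : Measurable g)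
    (c M : ℝ) (hM : ∀ x, ‖m x‖ ≤ M) (S : Set ℝ)
    (hgc : ∀ y, |g y| ≤ c * jap y)
    (hf : AEStronglyMeasurable (fun y => (V y : ℂ) * m y) (volume.restrict S)) :
    IntegrableOn (fun y => ((g y : ℝ) : ℂ) * ((V y : ℂ) * m y)) S := by
  refine Integrable.mono' ((hg.const_mul (c * M)).integrableOn (s := S))
    (AEStronglyMeasurable.mul (by fun_prop) hf) (Eventually.of_forall fun y => ?_)
  rw [norm_mul, norm_mul, Complex.norm_real, Complex.norm_real, Real.norm_eq_abs, Real.norm_eq_abs]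
  have := hM y
  have h2 := hgc y
  calc |g y| * (|V y| * ‖m y‖) ≤ (c * jap y) * (|V y| * M) := by
        gcongr
        exact (abs_nonneg _).trans h2
    _ = _ := by ring

/-- Any solution gives a measurable `V m`. -/
lemma meas (hV : Measurable V) (hg : Integrable (fun y => jap y * |V y|))
    (hm : ∀ x, m x = 1 + ∫ y in Ioi x, ((y - x : ℝ) : ℂ) * (V y : ℂ) * m y) :
    AEStronglyMeasurable (fun y => (V y : ℂ) * m y) volume := by
  set A : Set ℝ := {x | AEStronglyMeasurable (fun y => (V y : ℂ) * m y) (volume.restrict (Ioi x))}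
  have hup : IsUpperSet A := fun a b hab ha =>
    AEStronglyMeasurable.mono_measure ha (Measure.restrict_mono (Ioi_subset_Ioi hab) le_rfl)
  have hAm : MeasurableSet A := hup.ordConnected.measurableSet
  have hone : ∀ x ∉ A, m x = 1 := by
    intro x hx
    rw [hm x, integral_undef, add_zero]
    intro hint
    apply hx
    have h1 : AEStronglyMeasurable (fun y => ((y - x : ℝ) : ℂ)⁻¹ *
        (((y - x : ℝ) : ℂ) * (V y : ℂ) * m y)) (volume.restrict (Ioi x)) :=
      AEStronglyMeasurable.mul (by
        apply Measurable.aestronglyMeasurable; fun_prop) hint.1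
    refine h1.congr ?_
    filter_upwards [ae_restrict_mem measurableSet_Ioi] with y hy
    have : ((y - x : ℝ) : ℂ) ≠ 0 := by
      exact_mod_cast (sub_pos.2 hy).ne'
    field_simp
  have hB : AEStronglyMeasurable (fun y => (V y : ℂ) * m y) (volume.restrict Aᶜ) := by
    have : AEStronglyMeasurable (fun y => (V y : ℂ)) (volume.restrict Aᶜ) := by
      apply Measurable.aestronglyMeasurable; fun_prop
    refine this.congr ?_
    filter_upwards [ae_restrict_mem hAm.compl] with y hy
    rw [hone y hy, mul_one]
  obtain ⟨T, hTc, hT⟩ := TopologicalSpace.isOpen_iUnion_countable (fun x : A => Ioi (x : ℝ))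
    (fun _ => isOpen_Ioi)
  have hU : AEStronglyMeasurable (fun y => (V y : ℂ) * m y)
      (volume.restrict (⋃ i ∈ T, Ioi (i : ℝ))) := by
    have := hTc.to_subtype
    rw [biUnion_eq_iUnion, aestronglyMeasurable_iUnion_iff]
    exact fun i => i.1.2
  rw [hT] at hU
  have hS : (A \ ⋃ i : A, Ioi (i : ℝ)).Subsingleton := by
    intro a ha b hb
    by_contra hab
    rcases lt_or_gt_of_ne hab with h | h
    · exact hb.2 (mem_iUnion.2 ⟨⟨a, ha.1⟩, h⟩)
    · exact ha.2 (mem_iUnion.2 ⟨⟨b, hb.1⟩, h⟩)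
  have hS0 : volume (A \ ⋃ i : A, Ioi (i : ℝ)) = 0 := hS.measure_zero _
  have hD : AEStronglyMeasurable (fun y => (V y : ℂ) * m y)
      (volume.restrict (A \ ⋃ i : A, Ioi (i : ℝ))) := by
    rw [Measure.restrict_eq_zero.2 hS0]; exact aestronglyMeasurable_zero_measure _
  have hall := (aestronglyMeasurable_union_iff.2 ⟨aestronglyMeasurable_union_iff.2 ⟨hB, hU⟩, hD⟩)
  have huniv : (Aᶜ ∪ ⋃ i : A, Ioi (i : ℝ)) ∪ (A \ ⋃ i : A, Ioi (i : ℝ)) = univ := by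
    ext x; simp only [mem_union, mem_compl_iff, Set.mem_sdiff, mem_univ, iff_true]; tauto
  rwa [huniv, Measure.restrict_univ] at hall

lemma hasDeriv (f : ℝ → ℂ) (hf : Integrable f) (hyf : Integrable (fun y : ℝ => (y : ℂ) * f y))
    (x : ℝ) : HasDerivAt (fun x : ℝ => ∫ y in Ioi x, ((y - x : ℝ) : ℂ) * f y)
      (- ∫ y in Ioi x, f y) x := by
  have key := hasDerivAt_integral_of_dominated_loc_of_lip (𝕜 := ℝ) (μ := volume) (s := univ)
    (F := fun (x y : ℝ) => ((max (y - x) 0 : ℝ) : ℂ) * f y)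
    (F' := fun y => (Ioi x).indicator (fun y => - f y) y) (x₀ := x)
    (bound := fun y => ‖f y‖) univ_mem
    (Eventually.of_forall fun z => AEStronglyMeasurable.mul (by
        apply Measurable.aestronglyMeasurable; fun_prop) hf.1)
    (by
      refine Integrable.mono' (hyf.norm.add (hf.norm.const_mul |x|))
        (AEStronglyMeasurable.mul (by
        apply Measurable.aestronglyMeasurable; fun_prop) hf.1) (Eventually.of_forall fun y => ?_)
      simp only [norm_mul, Complex.norm_real, Real.norm_eq_abs, Pi.add_apply]
      rw [← add_mul]
      gcongr
      rw [abs_of_nonneg (le_max_right _ _)]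
      apply max_le
      · linarith [le_abs_self y, neg_abs_le x]
      · positivity)
    (hf.1.neg.indicator measurableSet_Ioi)
    (Eventually.of_forall fun y => by
      apply LipschitzOnWith.of_dist_le_mul
      intro a _ b _
      rw [dist_eq_norm, ← sub_mul, norm_mul, ← Complex.ofReal_sub, Complex.norm_real,
        Real.norm_eq_abs, dist_eq_norm, Real.norm_eq_abs, mul_comm]
      simp only [Real.coe_nnabs, abs_norm]
      refine mul_le_mul_of_nonneg_left ?_ (norm_nonneg _)
      calc |max (y - a) 0 - max (y - b) 0| ≤ |(y - a) - (y - b)| := by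
            simpa using abs_max_sub_max_le_max (y - a) 0 (y - b) 0
        _ = _ := by rw [← abs_neg]; congr 1; ring)
    hf.norm
    (by
      have : ∀ᵐ y : ℝ, y ≠ x := by simp [ae_iff]
      filter_upwards [this] with y hy
      rcases lt_or_gt_of_ne hy with h | h
      · rw [indicator_of_notMem (by simpa using h.le)]
        apply (hasDerivAt_const x (0:ℂ)).congr_of_eventuallyEq
        filter_upwards [lt_mem_nhds h] with z hz
        rw [max_eq_right (by linarith)]; simp
      · rw [indicator_of_mem (by exact h)]
        have h1 : HasDerivAt (fun z : ℝ => ((y - z : ℝ) : ℂ) * f y) (((-1 : ℝ) : ℂ) * f y) x :=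
          (((hasDerivAt_id x).const_sub y).ofReal_comp).mul_const _
        simp only [Complex.ofReal_neg, Complex.ofReal_one, neg_mul, one_mul] at h1
        apply h1.congr_of_eventuallyEq
        filter_upwards [gt_mem_nhds h] with z hz
        rw [max_eq_left (by linarith)])
  have h2 := key.2
  rw [integral_indicator measurableSet_Ioi, integral_neg] at h2
  refine h2.congr_of_eventuallyEq (Eventually.of_forall fun z => ?_)
  dsimp only
  rw [← integral_indicator measurableSet_Ioi]
  congr 1
  ext y
  by_cases h : z < y
  · rw [indicator_of_mem (by exact h), max_eq_left (by linarith)]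
  · rw [indicator_of_notMem (by exact h), max_eq_right (by linarith)]; simp

end core

lemma bnd (V : ℝ → ℝ) (m : ℝ → ℂ) (s : ℝ) (M : ℝ) (hM : ∀ x, ‖m x‖ ≤ M) (S : Set ℝ)
    (hS : MeasurableSet S)
    (hVint : Integrable (fun y : ℝ => jap y ^ (s + 1) * |V y|)) (g : ℝ → ℝ) (K : ℝ)
    (hg : ∀ y ∈ S, |g y| ≤ K * jap y ^ (s + 1)) :
    ‖∫ y in S, ((g y : ℝ) : ℂ) * ((V y : ℂ) * m y)‖ ≤
      M * K * ∫ y in S, jap y ^ (s + 1) * |V y| := by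
  rw [← integral_const_mul]
  apply norm_integral_le_of_norm_le (hVint.integrableOn.const_mul _)
  filter_upwards [ae_restrict_mem hS] with y hy
  rw [norm_mul, norm_mul, Complex.norm_real, Complex.norm_real, Real.norm_eq_abs, Real.norm_eq_abs]
  have h2 := hg y hy
  have := hM y
  calc |g y| * (|V y| * ‖m y‖) ≤ (K * jap y ^ (s + 1)) * (|V y| * M) := by
        gcongr
        exact (abs_nonneg _).trans h2
    _ = _ := by ring

lemma pow_bnd (z e : ℂ) (M : ℝ) (h1 : 1 ≤ M) (hz : ‖z‖ ≤ M) (he : ‖e‖ = 1) (r : ℕ) :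
    ‖z ^ r - e ^ r‖ ≤ r * M ^ r * ‖z - e‖ := by
  induction r with
  | zero => simp
  | succ n ih =>
    have : z ^ (n+1) - e ^ (n+1) = z * (z ^ n - e ^ n) + e ^ n * (z - e) := by ring
    rw [this]
    refine (norm_add_le _ _).trans ?_
    rw [norm_mul, norm_mul, norm_pow, he, one_pow, one_mul]
    have h2 : ‖z‖ * ‖z ^ n - e ^ n‖ ≤ M * (n * M ^ n * ‖z - e‖) := by gcongr
    have h3 : 1 ≤ M ^ (n+1) := one_le_pow₀ h1
    have h4 := norm_nonneg (z - e)
    push_cast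
    calc _ ≤ M * (n * M ^ n * ‖z - e‖) + M ^ (n+1) * ‖z - e‖ := by nlinarith
      _ = _ := by ring

/-- Bounds for powers of the zero-energy resonance `m₊(·,0)` of a non-generic potential with
an odd resonance: for `r = 1,…,4` and `α = 0,1`,
`|∂_x^α (m₊(x,0)^r − 1)| ≲ ⟨x⟩^{−s} W₊^{s+1}(x)` for `x ≥ −1` and
`|∂_x^α (m₊(x,0)^r − (−1)^r)| ≲ ⟨x⟩^{−s} W₋^{s+1}(x)` for `x ≤ 1`. -/
theorem statement_19 (V : ℝ → ℝ) (hVmeas : Measurable V)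
    (s : ℝ) (hs : 0 ≤ s)
    (hVint : Integrable (fun y : ℝ => jap y ^ (s + 1) * |V y|))
    (mp : ℝ → ℝ → ℂ) (hmp : IsJostPlus V mp)
    (hng : (∫ y : ℝ, (V y : ℂ) * mp y 0) = 0)
    (hodd : ∀ x : ℝ, mp (-x) 0 = - mp x 0) :
    ∀ r : ℕ, 1 ≤ r → r ≤ 4 → ∃ C : ℝ, 0 < C ∧
      (∀ x : ℝ, DifferentiableAt ℝ (fun x' => mp x' 0) x) ∧
      (∀ x : ℝ, -1 ≤ x →
        ‖mp x 0 ^ r - 1‖ ≤ C * jap x ^ (-s) * Wplus V (s + 1) x) ∧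
      (∀ x : ℝ, -1 ≤ x →
        ‖deriv (fun x' => mp x' 0 ^ r) x‖ ≤ C * jap x ^ (-s) * Wplus V (s + 1) x) ∧
      (∀ x : ℝ, x ≤ 1 →
        ‖mp x 0 ^ r - (-1 : ℂ) ^ r‖ ≤ C * jap x ^ (-s) * Wminus V (s + 1) x) ∧
      (∀ x : ℝ, x ≤ 1 →
        ‖deriv (fun x' => mp x' 0 ^ r) x‖ ≤ C * jap x ^ (-s) * Wminus V (s + 1) x) := by
  set m : ℝ → ℂ := fun x => mp x 0 with hmdef
  obtain ⟨⟨M0, hM0⟩, heq0⟩ := hmp 0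
  set M : ℝ := max M0 1 with hMdef
  have hM1 : 1 ≤ M := le_max_right _ _
  have hM : ∀ x, ‖m x‖ ≤ M := fun x => (hM0 x).trans (le_max_left _ _)
  have heq : ∀ x, m x = 1 + ∫ y in Ioi x, ((y - x : ℝ) : ℂ) * (V y : ℂ) * m y := by
    intro x; simpa [Dker] using heq0 x
  have hg : Integrable (fun y => jap y * |V y|) := by
    refine hVint.mono' (by
      apply Measurable.aestronglyMeasurable
      have := jap_cont.measurable
      fun_prop) (Eventually.of_forall fun y => ?_)
    rw [Real.norm_eq_abs, abs_of_nonneg (mul_nonneg (jap_pos y).le (abs_nonneg _))]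
    gcongr
    calc jap y = jap y ^ (1:ℝ) := (Real.rpow_one _).symm
      _ ≤ _ := Real.rpow_le_rpow_of_exponent_le (one_le_jap y) (by linarith)
  have hmeas := meas V m hVmeas hg heq
  have hmeas' : AEStronglyMeasurable (fun y => (V y : ℂ) * m y) (volume.restrict univ) := by
    rwa [Measure.restrict_univ]
  have hf : Integrable (fun y => (V y : ℂ) * m y) := by
    have := dom V m (fun _ => 1) hg (by fun_prop) 1 M hM univ
      (fun y => by simpa using one_le_jap y) hmeas'
    simpa [integrableOn_univ] using this
  have hyf : Integrable (fun y : ℝ => (y : ℂ) * ((V y : ℂ) * m y)) := by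
    have := dom V m (fun y => y) hg (by fun_prop) 1 M hM univ
      (fun y => by simpa using abs_le_jap y) hmeas'
    simpa [integrableOn_univ] using this
  have heq' : ∀ x, m x = 1 + ∫ y in Ioi x, ((y - x : ℝ) : ℂ) * ((V y : ℂ) * m y) := by
    intro x; rw [heq x]; simp only [mul_assoc]
  have hder : ∀ x, HasDerivAt m (- ∫ y in Ioi x, (V y : ℂ) * m y) x := by
    intro x
    have h := (hasDeriv _ hf hyf x).const_add 1
    exact h.congr_of_eventuallyEq (Eventually.of_forall heq')
  have hxyf : ∀ x : ℝ, Integrable (fun y : ℝ => ((y - x : ℝ) : ℂ) * ((V y : ℂ) * m y)) := by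
    intro x
    refine (hyf.sub (hf.const_mul (x : ℂ))).congr (Eventually.of_forall fun y => ?_)
    simp only [Pi.sub_apply]; push_cast; ring
  have hng' : ∫ y, (V y : ℂ) * m y = 0 := hng
  have hneg : ∀ x, - ∫ y in Ioi x, (V y : ℂ) * m y = ∫ y in Iic x, (V y : ℂ) * m y := by
    intro x
    have h := intervalIntegral.integral_Iic_add_Ioi (b := x) hf.integrableOn hf.integrableOn
    rw [hng'] at h
    linear_combination -h
  set c : ℂ := 1 + ∫ y : ℝ, (y : ℂ) * ((V y : ℂ) * m y) with hc
  have hleft : ∀ x, m x = c - ∫ y in Iic x, ((y - x : ℝ) : ℂ) * ((V y : ℂ) * m y) := by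
    intro x
    have h := intervalIntegral.integral_Iic_add_Ioi (b := x) (hxyf x).integrableOn
      (hxyf x).integrableOn
    have h2 : ∫ y : ℝ, ((y - x : ℝ) : ℂ) * ((V y : ℂ) * m y)
        = ∫ y : ℝ, (y : ℂ) * ((V y : ℂ) * m y) := by
      have : (fun y : ℝ => ((y - x : ℝ) : ℂ) * ((V y : ℂ) * m y)) =
          fun y : ℝ => (y : ℂ) * ((V y : ℂ) * m y) - (x : ℂ) * ((V y : ℂ) * m y) := by
        ext y; push_cast; ring
      rw [this, integral_sub hyf (hf.const_mul _), integral_const_mul, hng']; ring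
    rw [heq' x, hc, ← h2, ← h]; ring
  set K : ℝ := 2 * 2 ^ s with hK
  have hKpos : 0 < K := by positivity
  -- the four basic bounds
  have b1 : ∀ x, -1 ≤ x → ‖m x - 1‖ ≤ M * (K * jap x ^ (-s)) * Wplus V (s + 1) x := by
    intro x hx
    rw [heq' x, add_sub_cancel_left]
    refine bnd V m s M hM (Ioi x) measurableSet_Ioi hVint (fun y => y - x) _ fun y hy => ?_
    have hy' : x < y := hy
    rw [abs_of_pos (sub_pos.2 hy')]
    exact (ker_bound s hs x y hx hy'.le).1
  have b2 : ∀ x, -1 ≤ x → ‖- ∫ y in Ioi x, (V y : ℂ) * m y‖ ≤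
      M * (K * jap x ^ (-s)) * Wplus V (s + 1) x := by
    intro x hx
    have := bnd V m s M hM (Ioi x) measurableSet_Ioi hVint (fun y => 1) (K * jap x ^ (-s))
      fun y hy => by
        rw [abs_one]
        exact (ker_bound s hs x y hx (le_of_lt hy)).2
    rw [norm_neg]
    simpa [Wplus] using this
  have b3 : ∀ x, x ≤ 1 → ‖m x - c‖ ≤ M * (K * jap x ^ (-s)) * Wminus V (s + 1) x := by
    intro x hx
    rw [hleft x, sub_sub_cancel_left, norm_neg]
    refine bnd V m s M hM (Iic x) measurableSet_Iic hVint (fun y => y - x) _ fun y hy => ?_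
    have hy' : y ≤ x := hy
    rw [abs_of_nonpos (sub_nonpos.2 hy')]
    have := (ker_bound s hs (-x) (-y) (by linarith) (by linarith)).1
    rw [jap_neg, jap_neg] at this
    linarith
  have b4 : ∀ x, x ≤ 1 → ‖- ∫ y in Ioi x, (V y : ℂ) * m y‖ ≤
      M * (K * jap x ^ (-s)) * Wminus V (s + 1) x := by
    intro x hx
    have := bnd V m s M hM (Iic x) measurableSet_Iic hVint (fun y => 1) (K * jap x ^ (-s))
      fun y hy => by
        have hy' : y ≤ x := hy
        rw [abs_one]
        have := (ker_bound s hs (-x) (-y) (by linarith) (by linarith)).2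
        rwa [jap_neg, jap_neg] at this
    rw [hneg]
    simpa [Wminus] using this
  have hW0 : ∀ x, 0 ≤ Wplus V (s + 1) x := fun x => integral_nonneg fun y =>
    mul_nonneg (Real.rpow_nonneg (jap_pos y).le _) (abs_nonneg _)
  have hW1 : ∀ x, 0 ≤ Wminus V (s + 1) x := fun x => integral_nonneg fun y =>
    mul_nonneg (Real.rpow_nonneg (jap_pos y).le _) (abs_nonneg _)
  have hj1 : ∀ x, jap x ^ (-s) ≤ 1 := fun x =>
    Real.rpow_le_one_of_one_le_of_nonpos (one_le_jap x) (by linarith)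
  have hj0 : ∀ x, 0 ≤ jap x ^ (-s) := fun x => Real.rpow_nonneg (jap_pos x).le _
  have hM0' : 0 ≤ M := by linarith
  have hc1 : c = -1 := by
    have t1 : Tendsto m atTop (𝓝 1) := by
      rw [tendsto_iff_norm_sub_tendsto_zero]
      have ht := (tail_plus _ hVint).const_mul (M * K)
      rw [mul_zero] at ht
      refine tendsto_of_tendsto_of_tendsto_of_le_of_le' tendsto_const_nhds ht
        (Eventually.of_forall fun x => norm_nonneg _) ?_
      filter_upwards [eventually_ge_atTop (-1)] with x hx
      refine (b1 x hx).trans ?_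
      refine mul_le_mul_of_nonneg_right ?_ (hW0 x)
      have := mul_le_mul_of_nonneg_left (hj1 x) hKpos.le
      nlinarith
    have t2 : Tendsto (fun x => m (-x)) atTop (𝓝 c) := by
      rw [tendsto_iff_norm_sub_tendsto_zero]
      have ht := (tail_minus _ hVint).const_mul (M * K)
      rw [mul_zero] at ht
      refine tendsto_of_tendsto_of_tendsto_of_le_of_le' tendsto_const_nhds ht
        (Eventually.of_forall fun x => norm_nonneg _) ?_
      filter_upwards [eventually_ge_atTop (-1)] with x hx
      refine (b3 (-x) (by linarith)).trans ?_
      refine mul_le_mul_of_nonneg_right ?_ (hW1 _)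
      have := mul_le_mul_of_nonneg_left (hj1 (-x)) hKpos.le
      nlinarith
    have t3 : Tendsto (fun x => m (-x)) atTop (𝓝 (-1)) :=
      t1.neg.congr fun x => (hodd x).symm
    exact tendsto_nhds_unique t2 t3
  rw [hc1] at b3
  intro r hr1 hr4
  have hpd : ∀ x, ‖deriv (fun x' => m x' ^ r) x‖ ≤
      r * M ^ r * ‖- ∫ y in Ioi x, (V y : ℂ) * m y‖ := by
    intro x
    rw [show (fun x' => m x' ^ r) = m ^ r from rfl, ((hder x).pow r).deriv, norm_mul, norm_mul, norm_pow]
    gcongr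
    · simp
    · calc ‖m x‖ ^ (r - 1) ≤ M ^ (r - 1) := by gcongr; exact hM x
        _ ≤ M ^ r := pow_le_pow_right₀ hM1 (by omega)
  have hrpos : (0:ℝ) < r := by exact_mod_cast hr1
  have hMr : 0 < M ^ r := by positivity
  have hfin : ∀ x a b W : ℝ, a ≤ r * M ^ r * b → b ≤ M * (K * jap x ^ (-s)) * W →
      a ≤ (r * M ^ r * M * K) * jap x ^ (-s) * W := by
    intro x a b W h1 h2
    calc a ≤ r * M ^ r * b := h1
      _ ≤ r * M ^ r * (M * (K * jap x ^ (-s)) * W) := by gcongr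
      _ = _ := by ring
  refine ⟨r * M ^ r * M * K, by positivity, fun x => (hder x).differentiableAt,
    fun x hx => ?_, fun x hx => ?_, fun x hx => ?_, fun x hx => ?_⟩
  · have := pow_bnd (m x) 1 M hM1 (hM x) (by simp) r
    rw [one_pow] at this
    exact hfin x _ _ _ this (b1 x hx)
  · exact hfin x _ _ _ (hpd x) (b2 x hx)
  · exact hfin x _ _ _ (pow_bnd (m x) (-1) M hM1 (hM x) (by simp) r) (b3 x hx)
  · exact hfin x _ _ _ (hpd x) (b4 x hx)
end
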